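/- Let (E,d_E) be a separable metric space, let μ ∈ 𝒫_1(E) and let n ∈ ℕ. Then (1/(22·√(ln(2n)))) · max_{0 ≤ k ≤ ⌊log₂ n⌋} √(2^k/n) · b_{2^k,1}(μ) ≤ 𝔼[W_1(μ_n, μ)] ≤ 5 · ∑_{k=0}^{⌊log₂ n⌋} √(2^k/n) · b_{2^k,1}(μ), where μ_n is the empirical measure of μ with sample size n. -/

import Mathlib

open MeasureTheory ENNReal Filter

noncomputable section

/-- The `p`-Wasserstein distance between two measures on a metric space, as an
extended nonnegative real: the infimum over all couplings `γ` (measures on `E × E`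
with the prescribed marginals) of `(∫ d(x,y)^p dγ)^(1/p)`. -/
def Wp {E : Type*} [MetricSpace E] [MeasurableSpace E] (p : ℝ) (μ ν : Measure E) : ℝ≥0∞ :=
  ⨅ γ ∈ {γ : Measure (E × E) | γ.map Prod.fst = μ ∧ γ.map Prod.snd = ν},
    (∫⁻ z, edist z.1 z.2 ^ p ∂γ) ^ (1 / p)

/-- The (uniform) discrete measure `(1/n) ∑ δ_{X i}`. -/
def empiricalMeasure {E : Type*} [MeasurableSpace E] (n : ℕ) (X : Fin n → E) : Measure E :=
  (n : ℝ≥0∞)⁻¹ • ∑ i, Measure.dirac (X i)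

/-- The law of `n` independent samples of `μ`. -/
def sampleMeasure {E : Type*} [MeasurableSpace E] (μ : Measure E) (n : ℕ) :
    Measure (Fin n → E) :=
  Measure.pi fun _ => μ

/-- `𝔼[W_p(μ_n, μ)]`, where `μ_n` is the empirical measure of `μ` with sample size `n`. -/
def expWp {E : Type*} [MetricSpace E] [MeasurableSpace E] (p : ℝ) (μ : Measure E) (n : ℕ) :
    ℝ≥0∞ :=
  ∫⁻ X, Wp p (empiricalMeasure n X) μ ∂(sampleMeasure μ n)

/-- `(𝔼[W_p(μ_n, μ)^p])^{1/p}`, where `μ_n` is the empirical measure of `μ` with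
sample size `n`. -/
def expWpPow {E : Type*} [MetricSpace E] [MeasurableSpace E] (p : ℝ) (μ : Measure E) (n : ℕ) :
    ℝ≥0∞ :=
  (∫⁻ X, (Wp p (empiricalMeasure n X) μ) ^ p ∂(sampleMeasure μ n)) ^ (1 / p)

/-- The optimal uniform quantization error
`b_{n,p}(μ) = inf_{x₁,…,x_n} W_p(μ, (1/n) ∑ δ_{x_i})`. -/
def unifQuantErr {E : Type*} [MetricSpace E] [MeasurableSpace E] (p : ℝ) (n : ℕ)
    (μ : Measure E) : ℝ≥0∞ :=
  ⨅ x : Fin n → E, Wp p μ (empiricalMeasure n x)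

/-- The optimal quantization error `e_{n,p}(μ)`: the infimum of `W_p(μ, ν)` over all
probability measures `ν` supported on at most `n` points. -/
def quantErr {E : Type*} [MetricSpace E] [MeasurableSpace E] (p : ℝ) (n : ℕ)
    (μ : Measure E) : ℝ≥0∞ :=
  ⨅ ν ∈ {ν : Measure E | IsProbabilityMeasure ν ∧
      ∃ S : Finset E, S.card ≤ n ∧ ν (↑S : Set E)ᶜ = 0}, Wp p μ ν

/-- `μ` has a finite `p`-th moment: `∫ d(x, x₀)^p dμ(x) < ∞` for some `x₀`. -/
def HasFiniteMoment {E : Type*} [MetricSpace E] [MeasurableSpace E] (p : ℝ)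
    (μ : Measure E) : Prop :=
  ∃ x₀ : E, ∫⁻ x, edist x x₀ ^ p ∂μ ≠ ∞

end

/-!
By Kantorovich duality, `W₁(μ_n, μ)` is `1 / n` times the supremum of `∑ i, (f (X i) - ∫ f ∂μ)`
over the `1`-Lipschitz functions `f`.

For the upper bound, near-optimal uniform quantizers with `2 ^ k` points are realised by partitions
of unity `M` into `2 ^ k` pieces of equal mass. Chaining `f` through the quantizers, level `k`
contributes the sums of pieces of transport between the levels `k - 1` and `k`, whose
fluctuations are controlled in mean square and add up by the Cauchy-Schwarz inequality.

For the lower bound, cut the sample into about `n / 2 ^ k` disjoint blocks of `2 ^ k` points. Each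
block has discrepancy at least `2 ^ k * b_{2 ^ k, 1}(μ)`, witnessed by a `1`-Lipschitz function of
its own. With random signs, the signed sum of these functions is, by Hoeffding's inequality and a
union bound over pairs of sample points, Lipschitz along the sample with a constant of order
`√(n / 2 ^ k * log n)`. Extending it to `E`, one compares the sum of the block discrepancies with
the discrepancy of the whole sample.
-/

open scoped NNReal

section FiniteDuality

variable {E α β : Type*} [PseudoMetricSpace E]

lemma exists_lipschitzWith_one_eq_mul_add {K : ℝ≥0} {f : E → ℝ} (hf : LipschitzWith K f) :
    ∃ (g : E → ℝ) (c : ℝ), LipschitzWith 1 g ∧ ∀ x, f x = K * g x + c := by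
  rcases eq_or_ne K 0 with rfl | hK
  · rcases isEmpty_or_nonempty E with hE | ⟨⟨x₀⟩⟩
    · exact ⟨0, 0, LipschitzWith.const' 0, fun x => isEmptyElim x⟩
    · refine ⟨0, f x₀, LipschitzWith.const' 0, fun x => ?_⟩
      have : dist (f x) (f x₀) ≤ 0 := by simpa using hf.dist_le_mul x x₀
      simpa using dist_le_zero.1 this
  · have hK' : (K : ℝ) ≠ 0 := by exact_mod_cast hK
    refine ⟨fun x => (K : ℝ)⁻¹ * f x, 0, LipschitzWith.of_dist_le_mul fun x y => ?_, fun x => ?_⟩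
    · rw [Real.dist_eq, ← mul_sub, abs_mul, ← Real.dist_eq, abs_of_nonneg (by positivity),
        inv_mul_le_iff₀ (by positivity)]
      simpa using hf.dist_le_mul x y
    · simp only [add_zero, mul_inv_cancel_left₀ hK']

variable [Fintype α] [Fintype β]

lemma sum_mul_sub_sum_mul_le_of_lipschitzWith {p : α → ℝ} {q : β → ℝ} {x : α → E} {y : β → E}
    {w : ℝ} (hp : ∑ a, p a = 1) (hq : ∑ b, q b = 1)
    (hw : ∀ f : E → ℝ, LipschitzWith 1 f → ∑ a, p a * f (x a) - ∑ b, q b * f (y b) ≤ w)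
    {K : ℝ≥0} {f : E → ℝ} (hf : LipschitzWith K f) :
    ∑ a, p a * f (x a) - ∑ b, q b * f (y b) ≤ K * w := by
  obtain ⟨g, c, hg, hfg⟩ := exists_lipschitzWith_one_eq_mul_add hf
  calc ∑ a, p a * f (x a) - ∑ b, q b * f (y b)
      = K * (∑ a, p a * g (x a) - ∑ b, q b * g (y b)) + (∑ a, p a - ∑ b, q b) * c := by
        simp only [hfg, mul_add, Finset.sum_add_distrib, ← Finset.sum_mul, mul_sub,
          Finset.mul_sum, mul_left_comm]
        ring
    _ ≤ K * w := by
        rw [hp, hq, sub_self, zero_mul, add_zero]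
        exact mul_le_mul_of_nonneg_left (hw g hg) K.2

/-- The finite `c`-transform: the largest function which is `K`-Lipschitz and at most `v b` at each
point `y b`. -/
noncomputable def lipschitzEnvelope (K : ℝ≥0) (y : β → E) (v : β → ℝ) (z : E) : ℝ :=
  ⨅ b, (v b + K * dist z (y b))

lemma lipschitzEnvelope_apply_le {β : Type*} [Finite β] (K : ℝ≥0) (y : β → E) (v : β → ℝ) (b : β) :
    lipschitzEnvelope K y v (y b) ≤ v b :=
  (ciInf_le (Set.finite_range _).bddBelow b).trans_eq (by simp)

lemma lipschitzWith_lipschitzEnvelope {β : Type*} [Finite β] [Nonempty β] (K : ℝ≥0) (y : β → E)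
    (v : β → ℝ) :
    LipschitzWith K (lipschitzEnvelope K y v) := by
  refine LipschitzWith.of_le_add_mul K fun z z' => ?_
  rw [← sub_le_iff_le_add]
  refine le_ciInf fun b => sub_le_iff_le_add.2 ?_
  calc lipschitzEnvelope K y v z ≤ v b + K * dist z (y b) :=
        ciInf_le (Set.finite_range _).bddBelow b
    _ ≤ v b + K * (dist z z' + dist z' (y b)) := by gcongr; exact dist_triangle _ _ _
    _ = v b + K * dist z' (y b) + K * dist z z' := by ring

/-- The linear map sending weights `π` on `α × β` to the two marginals and the cost of `π`. -/
def marginalsAndCost (c : α × β → ℝ) :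
    (α × β → ℝ) →ₗ[ℝ] (α → ℝ) × (β → ℝ) × ℝ where
  toFun π := (fun a => ∑ b, π (a, b), fun b => ∑ a, π (a, b), ∑ z, π z * c z)
  map_add' π π' := by
    simp only [Pi.add_apply, Finset.sum_add_distrib, add_mul]; rfl
  map_smul' t π := by
    simp only [Pi.smul_apply, smul_eq_mul, ← Finset.mul_sum, mul_assoc]; rfl

lemma marginalsAndCost_single [DecidableEq α] [DecidableEq β] (c : α × β → ℝ) (a : α) (b : β) :
    marginalsAndCost c (Pi.single (a, b) 1) = (Pi.single a 1, Pi.single b 1, c (a, b)) := by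
  refine Prod.ext (funext fun a' => ?_) (Prod.ext (funext fun b' => ?_) ?_)
  · by_cases h : a' = a <;> simp [marginalsAndCost, Pi.single_apply, Finset.filter_eq', h]
  · by_cases h : b' = b <;> simp [marginalsAndCost, Pi.single_apply, Finset.filter_eq', h]
  · simp [marginalsAndCost, Pi.single_apply]

lemma map_prod_pi_eq_sum [DecidableEq α] [DecidableEq β]
    (F : (α → ℝ) × (β → ℝ) × ℝ →L[ℝ] ℝ) (p : α → ℝ) (q : β → ℝ) (s : ℝ) :
    F (p, q, s) = ∑ a, p a * F (Pi.single a 1, 0, 0) + ∑ b, q b * F (0, Pi.single b 1, 0)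
      + s * F (0, 0, 1) := by
  have hdecomp : (p, q, s) = ∑ a, p a • ((Pi.single a 1, 0, 0) : (α → ℝ) × (β → ℝ) × ℝ)
      + ∑ b, q b • ((0, Pi.single b 1, 0) : (α → ℝ) × (β → ℝ) × ℝ) + s • (0, 0, 1) := by
    simp [Prod.ext_iff, Prod.fst_sum, Prod.snd_sum, ← Pi.single_smul, Finset.univ_sum_single]
  rw [hdecomp]
  simp only [map_add, map_sum, map_smul, smul_eq_mul]

/-- Hahn–Banach separation, with the separating functional tested on the vertices of the simplex. -/
lemma exists_potentials_of_forall_lt_cost {c : α × β → ℝ} {p : α → ℝ} {q : β → ℝ} {w : ℝ}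
    (hp : ∑ a, p a = 1)
    (h : ∀ π ∈ stdSimplex ℝ (α × β), (∀ a, ∑ b, π (a, b) = p a) → (∀ b, ∑ a, π (a, b) = q b) →
      w < ∑ z, π z * c z) :
    ∃ (U : α → ℝ) (V : β → ℝ) (t : ℝ≥0), (∀ a b, U a + V b ≤ t * c (a, b)) ∧
      t * w < ∑ a, p a * U a + ∑ b, q b * V b := by
  classical
  have hcompact : IsCompact (marginalsAndCost c '' stdSimplex ℝ (α × β)) :=
    (isCompact_stdSimplex ℝ _).image (marginalsAndCost c).continuous_of_finiteDimensional
  have hclosed : IsClosed ({p} ×ˢ ({q} ×ˢ Set.Iic w) : Set ((α → ℝ) × (β → ℝ) × ℝ)) :=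
    isClosed_singleton.prod (isClosed_singleton.prod isClosed_Iic)
  have hdisj : Disjoint (marginalsAndCost c '' stdSimplex ℝ (α × β))
      ({p} ×ˢ ({q} ×ˢ Set.Iic w)) := by
    rw [Set.disjoint_left]
    rintro _ ⟨π, hπ, rfl⟩ ⟨hp, hq, hcost⟩
    exact (h π hπ (congrFun hp) (congrFun hq)).not_ge hcost
  obtain ⟨F, u, v, hFu, huv, hvF⟩ := geometric_hahn_banach_compact_closed
    ((convex_stdSimplex ℝ _).linear_image _) hcompact
    ((convex_singleton p).prod ((convex_singleton q).prod (convex_Iic w))) hclosed hdisj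
  set U : α → ℝ := fun a => F (Pi.single a 1, 0, 0)
  set V : β → ℝ := fun b => F (0, Pi.single b 1, 0)
  set t : ℝ := F (0, 0, 1)
  have hlow (s : ℝ) (hs : s ≤ w) : v < ∑ a, p a * U a + ∑ b, q b * V b + s * t := by
    rw [← map_prod_pi_eq_sum]
    exact hvF _ ⟨rfl, rfl, hs⟩
  have hup (a : α) (b : β) : U a + V b + c (a, b) * t < u := by
    have := hFu _ ⟨_, single_mem_stdSimplex ℝ (a, b), marginalsAndCost_single c a b⟩
    rw [map_prod_pi_eq_sum] at this
    simpa [Pi.single_apply] using this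
  have ht : t ≤ 0 := by
    by_contra! ht
    set m := ∑ a, p a * U a + ∑ b, q b * V b
    have := hlow (min w ((v - m) / t)) (min_le_left _ _)
    have := mul_le_mul_of_nonneg_right (min_le_right w ((v - m) / t)) ht.le
    rw [div_mul_cancel₀ _ ht.ne'] at this
    linarith
  refine ⟨fun a => U a - u, V, ⟨-t, neg_nonneg.2 ht⟩, fun a b => ?_, ?_⟩
  · change U a - u + V b ≤ -t * c (a, b)
    linarith [hup a b]
  · change -t * w < ∑ a, p a * (U a - u) + ∑ b, q b * V b
    simp only [mul_sub, Finset.sum_sub_distrib, ← Finset.sum_mul, hp, one_mul]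
    linarith [hlow w le_rfl]

theorem exists_coupling_of_forall_lipschitzWith {x : α → E} {y : β → E} {p : α → ℝ} {q : β → ℝ}
    (hp : p ∈ stdSimplex ℝ α) (hq : q ∈ stdSimplex ℝ β) {w : ℝ}
    (hw : ∀ f : E → ℝ, LipschitzWith 1 f → ∑ a, p a * f (x a) - ∑ b, q b * f (y b) ≤ w) :
    ∃ π ∈ stdSimplex ℝ (α × β), (∀ a, ∑ b, π (a, b) = p a) ∧ (∀ b, ∑ a, π (a, b) = q b) ∧
      ∑ z, π z * dist (x z.1) (y z.2) ≤ w := by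
  by_contra! h
  obtain ⟨U, V, t, hUV, hlt⟩ := exists_potentials_of_forall_lt_cost hp.2 h
  have : Nonempty β := not_isEmpty_iff.1 fun _ => by simpa using hq.2
  set f := lipschitzEnvelope t y (fun b => -V b)
  have hfx (a : α) : U a ≤ f (x a) := le_ciInf fun b => by linarith [hUV a b]
  have hfy (b : β) : V b ≤ -f (y b) := by
    linarith [lipschitzEnvelope_apply_le t y (fun b => -V b) b]
  have hle := sum_mul_sub_sum_mul_le_of_lipschitzWith hp.2 hq.2 hw
    (lipschitzWith_lipschitzEnvelope t y fun b => -V b)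
  refine hlt.not_ge (le_trans ?_ hle)
  rw [sub_eq_add_neg, ← Finset.sum_neg_distrib]
  simp only [← mul_neg]
  exact add_le_add (Finset.sum_le_sum fun a _ => mul_le_mul_of_nonneg_left (hfx a) (hp.1 a))
    (Finset.sum_le_sum fun b _ => mul_le_mul_of_nonneg_left (hfy b) (hq.1 b))

lemma exists_mem_stdSimplex_mul_sum_eq [Nonempty α] {v : α → ℝ} (hv : ∀ a, 0 ≤ v a) :
    ∃ u ∈ stdSimplex ℝ α, ∀ a, u a * ∑ a', v a' = v a := by
  classical
  rcases (Finset.sum_nonneg fun a _ => hv a).eq_or_lt with h | h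
  · have hv0 (a : α) : v a = 0 :=
      (Finset.sum_eq_zero_iff_of_nonneg fun a _ => hv a).1 h.symm a (Finset.mem_univ a)
    exact ⟨_, single_mem_stdSimplex ℝ (Classical.arbitrary α), fun a => by simp [hv0]⟩
  · refine ⟨fun a => v a / ∑ a', v a', ⟨fun a => div_nonneg (hv a) h.le, ?_⟩,
      fun a => div_mul_cancel₀ _ h.ne'⟩
    rw [← Finset.sum_div, div_self h.ne']

end FiniteDuality

section Moments

variable {E : Type*} [MetricSpace E] [MeasurableSpace E] [OpensMeasurableSpace E] {μ : Measure E}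

lemma integrable_dist_left [IsFiniteMeasure μ] (hμ : HasFiniteMoment 1 μ) (x₀ : E) :
    Integrable (fun x => dist x x₀) μ := by
  obtain ⟨x₁, hx₁⟩ := hμ
  have hdist : Integrable (fun x => dist x x₁) μ := by
    refine ⟨(continuous_id.dist continuous_const).aestronglyMeasurable, ?_⟩
    simpa only [hasFiniteIntegral_iff_norm, Real.norm_of_nonneg dist_nonneg, ← edist_dist,
      ENNReal.rpow_one] using lt_top_iff_ne_top.2 hx₁
  refine (hdist.add (integrable_const (dist x₁ x₀))).mono'
    (continuous_id.dist continuous_const).aestronglyMeasurable (ae_of_all _ fun x => ?_)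
  rw [Real.norm_of_nonneg dist_nonneg]
  exact dist_triangle _ _ _

lemma integrable_of_lipschitzWith [IsFiniteMeasure μ] (hμ : HasFiniteMoment 1 μ) {K : ℝ≥0}
    {f : E → ℝ} (hf : LipschitzWith K f) : Integrable f μ := by
  have ⟨x₀, _⟩ := hμ
  refine (((integrable_dist_left hμ x₀).const_mul K).add (integrable_const |f x₀|)).mono'
    hf.continuous.aestronglyMeasurable (ae_of_all _ fun x => ?_)
  have hdist := hf.dist_le_mul x x₀
  rw [Real.dist_eq] at hdist
  rw [Real.norm_eq_abs, Pi.add_apply]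
  linarith [abs_sub_abs_le_abs_sub (f x) (f x₀)]

lemma sub_integral_le_integral_dist [IsProbabilityMeasure μ] (hμ : HasFiniteMoment 1 μ)
    {f : E → ℝ} (hf : LipschitzWith 1 f) (x : E) :
    f x - ∫ y, f y ∂μ ≤ ∫ y, dist y x ∂μ := by
  have hfi := integrable_of_lipschitzWith hμ hf
  calc f x - ∫ y, f y ∂μ = ∫ y, (f x - f y) ∂μ := by
        rw [integral_sub (integrable_const _) hfi, integral_const, probReal_univ, one_smul]
    _ ≤ ∫ y, dist y x ∂μ :=
        integral_mono ((integrable_const _).sub hfi) (integrable_dist_left hμ x) fun y => by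
          simpa [dist_comm y x] using (le_abs_self _).trans (hf.dist_le_mul x y)

end Moments

section Wasserstein

variable {E : Type*} [MetricSpace E] [MeasurableSpace E]

lemma Wp_comm (p : ℝ) (μ ν : Measure E) : Wp p μ ν = Wp p ν μ := by
  suffices h : ∀ μ ν : Measure E, Wp p μ ν ≤ Wp p ν μ from (h μ ν).antisymm (h ν μ)
  refine fun μ ν => le_iInf₂ fun γ hγ => ?_
  refine (iInf₂_le (γ.map Prod.swap) (by
    rw [Set.mem_ofPred_eq, Measure.map_map measurable_fst measurable_swap,
      Measure.map_map measurable_snd measurable_swap]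
    exact hγ.symm)).trans_eq ?_
  rw [show γ.map Prod.swap = γ.map MeasurableEquiv.prodComm from rfl, lintegral_map_equiv]
  congr! 3 with z
  exact congrArg (· ^ p) (edist_comm _ _)

lemma Wp_one_le_lintegral_edist (γ : Measure (E × E)) :
    Wp 1 (γ.map Prod.fst) (γ.map Prod.snd) ≤ ∫⁻ z, edist z.1 z.2 ∂γ :=
  (iInf₂_le γ ⟨rfl, rfl⟩).trans_eq (by simp only [ENNReal.rpow_one, div_one])

lemma ofReal_integral_sub_integral_le_Wp_one {μ ν : Measure E} {f : E → ℝ}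
    (hf : LipschitzWith 1 f) (hfμ : Integrable f μ) (hfν : Integrable f ν) :
    ENNReal.ofReal (∫ x, f x ∂μ - ∫ x, f x ∂ν) ≤ Wp 1 μ ν := by
  refine le_iInf₂ ?_
  rintro γ ⟨rfl, rfl⟩
  simp only [ENNReal.rpow_one, div_one]
  have hsub : ∫ x, f x ∂γ.map Prod.fst - ∫ x, f x ∂γ.map Prod.snd = ∫ z, (f z.1 - f z.2) ∂γ := by
    rw [integral_map measurable_fst.aemeasurable hfμ.1,
      integral_map measurable_snd.aemeasurable hfν.1]
    exact (integral_sub (hfμ.comp_measurable measurable_fst)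
      (hfν.comp_measurable measurable_snd)).symm
  rw [hsub]
  calc ENNReal.ofReal (∫ z, (f z.1 - f z.2) ∂γ) ≤ ‖∫ z, (f z.1 - f z.2) ∂γ‖ₑ :=
        Real.ofReal_le_enorm _
    _ ≤ ∫⁻ z, ‖f z.1 - f z.2‖ₑ ∂γ := enorm_integral_le_lintegral_enorm _
    _ ≤ ∫⁻ z, edist z.1 z.2 ∂γ := lintegral_mono fun z => by
        simpa [edist_eq_enorm_sub] using hf z.1 z.2

end Wasserstein

section EmpiricalMeasure

variable {E : Type*} [MeasurableSpace E]

lemma integrable_empiricalMeasure {n : ℕ} (X : Fin n → E) {f : E → ℝ}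
    (hf : StronglyMeasurable f) : Integrable f (empiricalMeasure n X) := by
  rcases eq_or_ne n 0 with rfl | hn
  · simp [empiricalMeasure]
  · exact (integrable_finsetSum_measure.2 fun i _ => integrable_dirac' hf (by simp)).smul_measure
      (by simp [hn])

lemma integral_empiricalMeasure {n : ℕ} (X : Fin n → E) {f : E → ℝ} (hf : StronglyMeasurable f) :
    ∫ x, f x ∂empiricalMeasure n X = (∑ i, f (X i)) / n := by
  rw [empiricalMeasure, integral_smul_measure,
    integral_finsetSum_measure fun i _ => integrable_dirac' hf (by simp)]
  simp [integral_dirac' _ _ hf, div_eq_inv_mul]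

end EmpiricalMeasure

section Discrepancy

variable {E ι : Type*} [MetricSpace E] [MeasurableSpace E] {μ : Measure E}

/-- The fluctuation `∑ i ∈ A, (f (X i) - ∫ f dμ)` of a function `f` along the sample points with
indices in `A`. -/
noncomputable def centeredSum (μ : Measure E) (A : Finset ι) (f : E → ℝ) (X : ι → E) : ℝ :=
  ∑ i ∈ A, (f (X i) - ∫ y, f y ∂μ)

/-- The unnormalised dual form of `W₁`: the largest fluctuation of a `1`-Lipschitz function along
the sample points with indices in `A`. By Kantorovich duality it is `#A` times the `1`-Wasserstein
distance between the empirical measure of these points and `μ`. -/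
noncomputable def lipDiscrepancy (μ : Measure E) (A : Finset ι) (X : ι → E) : ℝ :=
  ⨆ f : {f : E → ℝ // LipschitzWith 1 f}, centeredSum μ A f.1 X

lemma lipDiscrepancy_le {A : Finset ι} {X : ι → E} {w : ℝ}
    (h : ∀ f : E → ℝ, LipschitzWith 1 f → centeredSum μ A f X ≤ w) : lipDiscrepancy μ A X ≤ w :=
  have : Nonempty {f : E → ℝ // LipschitzWith 1 f} := ⟨⟨0, LipschitzWith.const' 0⟩⟩
  ciSup_le fun f => h f.1 f.2

variable [OpensMeasurableSpace E] [IsProbabilityMeasure μ]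

lemma centeredSum_le_lipDiscrepancy (hμ : HasFiniteMoment 1 μ) (A : Finset ι) (X : ι → E)
    {f : E → ℝ} (hf : LipschitzWith 1 f) : centeredSum μ A f X ≤ lipDiscrepancy μ A X := by
  refine le_ciSup (f := fun f : {f : E → ℝ // LipschitzWith 1 f} => centeredSum μ A f.1 X)
    ⟨∑ i ∈ A, ∫ y, dist y (X i) ∂μ, ?_⟩ ⟨f, hf⟩
  rintro _ ⟨g, rfl⟩
  exact Finset.sum_le_sum fun i _ => sub_integral_le_integral_dist hμ g.2 _

lemma centeredSum_le_mul_lipDiscrepancy (hμ : HasFiniteMoment 1 μ) (A : Finset ι) (X : ι → E)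
    {K : ℝ≥0} {f : E → ℝ} (hf : LipschitzWith K f) :
    centeredSum μ A f X ≤ K * lipDiscrepancy μ A X := by
  obtain ⟨g, c, hg, hfg⟩ := exists_lipschitzWith_one_eq_mul_add hf
  have hint : ∫ y, f y ∂μ = K * ∫ y, g y ∂μ + c := by
    simp only [hfg]
    rw [integral_add ((integrable_of_lipschitzWith hμ hg).const_mul _) (integrable_const _),
      integral_const_mul, integral_const, probReal_univ, one_smul]
  calc centeredSum μ A f X = K * centeredSum μ A g X := by
        simp only [centeredSum, hint]
        simp only [hfg, Finset.mul_sum]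
        exact Finset.sum_congr rfl fun i _ => by ring
    _ ≤ K * lipDiscrepancy μ A X :=
        mul_le_mul_of_nonneg_left (centeredSum_le_lipDiscrepancy hμ A X hg) K.2

lemma lipDiscrepancy_nonneg (hμ : HasFiniteMoment 1 μ) (A : Finset ι) (X : ι → E) :
    0 ≤ lipDiscrepancy μ A X := by
  simpa [centeredSum] using centeredSum_le_lipDiscrepancy hμ A X (LipschitzWith.const' 0)

lemma lipDiscrepancy_le_add_sum_dist (hμ : HasFiniteMoment 1 μ) (A : Finset ι) (X Y : ι → E) :
    lipDiscrepancy μ A X ≤ lipDiscrepancy μ A Y + ∑ i ∈ A, dist (X i) (Y i) := by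
  refine lipDiscrepancy_le fun f hf => ?_
  calc centeredSum μ A f X ≤ ∑ i ∈ A, ((f (Y i) - ∫ y, f y ∂μ) + dist (X i) (Y i)) := by
        refine Finset.sum_le_sum fun i _ => ?_
        have : f (X i) - f (Y i) ≤ dist (X i) (Y i) := by
          simpa using (le_abs_self _).trans (hf.dist_le_mul (X i) (Y i))
        linarith
    _ ≤ lipDiscrepancy μ A Y + ∑ i ∈ A, dist (X i) (Y i) := by
        rw [Finset.sum_add_distrib]
        gcongr
        exact centeredSum_le_lipDiscrepancy hμ A Y hf

lemma continuous_lipDiscrepancy [Finite ι] (hμ : HasFiniteMoment 1 μ) (A : Finset ι) :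
    Continuous (lipDiscrepancy μ A) := by
  have := Fintype.ofFinite ι
  refine LipschitzWith.continuous (K := A.card) (LipschitzWith.of_le_add_mul _ fun X Y => ?_)
  refine (lipDiscrepancy_le_add_sum_dist hμ A X Y).trans (add_le_add_right ?_ _)
  calc ∑ i ∈ A, dist (X i) (Y i) ≤ ∑ _i ∈ A, dist X Y :=
        Finset.sum_le_sum fun i _ => dist_le_pi_dist X Y i
    _ = (A.card : ℝ≥0) * dist X Y := by simp

variable [Fintype ι]

lemma integrable_lipDiscrepancy [SecondCountableTopology E] (hμ : HasFiniteMoment 1 μ)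
    (A : Finset ι) : Integrable (lipDiscrepancy μ A) (Measure.pi fun _ => μ) := by
  have ⟨x₀, _⟩ := hμ
  have hdist (i : ι) : Integrable (fun X : ι → E => dist (X i) x₀) (Measure.pi fun _ => μ) :=
    integrable_comp_eval (μ := fun _ : ι => μ) (integrable_dist_left hμ x₀)
  refine ((integrable_const (lipDiscrepancy μ A fun _ => x₀)).add
    (integrable_finsetSum A fun i _ => hdist i)).mono'
    (continuous_lipDiscrepancy hμ A).aestronglyMeasurable (ae_of_all _ fun X => ?_)
  rw [Real.norm_of_nonneg (lipDiscrepancy_nonneg hμ A X)]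
  exact lipDiscrepancy_le_add_sum_dist hμ A X _

end Discrepancy

section BalancedPartition

variable {E ι : Type*} [MeasurableSpace E] [Fintype ι] {μ : Measure E}

/-- A partition of unity on `E` into `card ι` functions of equal mass for `μ`; it replaces a
partition of `E` into cells of equal mass, which need not exist if `μ` has atoms. -/
structure IsBalancedPartition (μ : Measure E) (M : ι → E → ℝ) : Prop where
  measurable : ∀ j, Measurable (M j)
  nonneg : ∀ j x, 0 ≤ M j x
  sum_eq_one : ∀ x, ∑ j, M j x = 1
  integral_eq : ∀ j, ∫ x, M j x ∂μ = (Fintype.card ι : ℝ)⁻¹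

namespace IsBalancedPartition

variable {M : ι → E → ℝ}

lemma le_one (hM : IsBalancedPartition μ M) (j : ι) (x : E) : M j x ≤ 1 :=
  hM.sum_eq_one x ▸ Finset.single_le_sum (f := fun j => M j x) (fun j _ => hM.nonneg j x)
    (Finset.mem_univ j)

lemma integrable [IsFiniteMeasure μ] (hM : IsBalancedPartition μ M) (j : ι) :
    Integrable (M j) μ :=
  (integrable_const (1 : ℝ)).mono' (hM.measurable j).aestronglyMeasurable <| ae_of_all _ fun x => by
    simpa only [Real.norm_of_nonneg (hM.nonneg j x)] using hM.le_one j x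

lemma integrable_mul [IsFiniteMeasure μ] (hM : IsBalancedPartition μ M) (j : ι) {g : E → ℝ}
    (hg : Integrable g μ) : Integrable (fun x => M j x * g x) μ :=
  hg.bdd_mul (c := 1) (hM.measurable j).aestronglyMeasurable <| ae_of_all _ fun x => by
    simpa only [Real.norm_of_nonneg (hM.nonneg j x)] using hM.le_one j x

lemma lintegral_eq [IsFiniteMeasure μ] (hM : IsBalancedPartition μ M) (j : ι) :
    ∫⁻ x, ENNReal.ofReal (M j x) ∂μ = (Fintype.card ι : ℝ≥0∞)⁻¹ := by
  have : Nonempty ι := ⟨j⟩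
  rw [← ofReal_integral_eq_lintegral_ofReal (hM.integrable j) (ae_of_all _ (hM.nonneg j)),
    hM.integral_eq, ENNReal.ofReal_inv_of_pos (by exact_mod_cast Fintype.card_pos),
    ENNReal.ofReal_natCast]

lemma sum_withDensity (hM : IsBalancedPartition μ M) :
    ∑ j, μ.withDensity (fun x => ENNReal.ofReal (M j x)) = μ := by
  ext s hs
  simp only [Measure.finsetSum_apply, withDensity_apply _ hs]
  rw [← lintegral_finsetSum _ fun j _ => (hM.measurable j).ennreal_ofReal]
  simp only [← ENNReal.ofReal_sum_of_nonneg fun j _ => hM.nonneg j _, hM.sum_eq_one,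
    ENNReal.ofReal_one, lintegral_one, Measure.restrict_apply_univ]

end IsBalancedPartition

end BalancedPartition

section PartitionCost

variable {E ι : Type*} [MetricSpace E] [MeasurableSpace E] [Fintype ι] {μ : Measure E}
  {M : ι → E → ℝ}

/-- The cost of transporting, for each `j`, the part of `μ` with density `M j` to the centre
`z j`. -/
noncomputable def partitionCost (μ : Measure E) (M : ι → E → ℝ) (z : ι → E) : ℝ :=
  ∫ x, ∑ j, M j x * dist x (z j) ∂μ

variable [OpensMeasurableSpace E]

lemma IsBalancedPartition.integrable_mul_dist [IsFiniteMeasure μ] (hM : IsBalancedPartition μ M)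
    (hμ : HasFiniteMoment 1 μ) (j : ι) (z : E) : Integrable (fun x => M j x * dist x z) μ :=
  hM.integrable_mul j (integrable_dist_left hμ z)

lemma IsBalancedPartition.partitionCost_eq_sum [IsFiniteMeasure μ] (hM : IsBalancedPartition μ M)
    (hμ : HasFiniteMoment 1 μ) (z : ι → E) :
    partitionCost μ M z = ∑ j, ∫ x, M j x * dist x (z j) ∂μ :=
  integral_finsetSum _ fun j _ => hM.integrable_mul_dist hμ j (z j)

lemma IsBalancedPartition.lintegral_edist_dirac_prod [IsFiniteMeasure μ]
    [SecondCountableTopology E] (hM : IsBalancedPartition μ M) (hμ : HasFiniteMoment 1 μ) (j : ι)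
    (z : E) :
    ∫⁻ w, edist w.1 w.2
        ∂(Measure.dirac z).prod (μ.withDensity fun x => ENNReal.ofReal (M j x)) =
      ENNReal.ofReal (∫ x, M j x * dist x z ∂μ) := by
  have hdist : Measurable fun w : E × E => edist w.1 w.2 := measurable_fst.edist measurable_snd
  rw [Measure.dirac_prod, lintegral_map hdist measurable_prodMk_left,
    lintegral_withDensity_eq_lintegral_mul _ (hM.measurable j).ennreal_ofReal
      (measurable_edist_right : Measurable (edist z)),
    ofReal_integral_eq_lintegral_ofReal (hM.integrable_mul_dist hμ j z)
      (ae_of_all _ fun x => mul_nonneg (hM.nonneg j x) dist_nonneg)]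
  refine lintegral_congr fun x => ?_
  rw [ENNReal.ofReal_mul (hM.nonneg j x), ← edist_dist, edist_comm]
  rfl

lemma IsBalancedPartition.Wp_one_empiricalMeasure_le [IsFiniteMeasure μ]
    [SecondCountableTopology E] {n : ℕ} {M : Fin n → E → ℝ} (hM : IsBalancedPartition μ M)
    (hμ : HasFiniteMoment 1 μ) (z : Fin n → E) :
    Wp 1 (empiricalMeasure n z) μ ≤ ENNReal.ofReal (partitionCost μ M z) := by
  set γ : Measure (E × E) :=
    ∑ j, (Measure.dirac (z j)).prod (μ.withDensity fun x => ENNReal.ofReal (M j x)) with hγ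
  have hfst : γ.map Prod.fst = empiricalMeasure n z := by
    simp only [hγ, Measure.map_finset_sum' measurable_fst.aemeasurable, Measure.map_fst_prod,
      withDensity_apply _ MeasurableSet.univ, Measure.restrict_univ, hM.lintegral_eq,
      Fintype.card_fin, ← Finset.smul_sum, empiricalMeasure]
  have hsnd : γ.map Prod.snd = μ := by
    simp only [hγ, Measure.map_finset_sum' measurable_snd.aemeasurable, Measure.map_snd_prod,
      measure_univ, one_smul, hM.sum_withDensity]
  calc Wp 1 (empiricalMeasure n z) μ ≤ ∫⁻ w, edist w.1 w.2 ∂γ := by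
        rw [← hfst, ← hsnd]
        exact Wp_one_le_lintegral_edist γ
    _ = ENNReal.ofReal (partitionCost μ M z) := by
        rw [hγ, lintegral_finsetSum_measure, hM.partitionCost_eq_sum hμ,
          ENNReal.ofReal_sum_of_nonneg fun j _ =>
            integral_nonneg fun x => mul_nonneg (hM.nonneg j x) dist_nonneg]
        exact Finset.sum_congr rfl fun j _ => hM.lintegral_edist_dirac_prod hμ j (z j)

end PartitionCost

section Quantizer

variable {E β : Type*} [MeasurableSpace E] [Fintype β] [MeasurableSpace β]
  [MeasurableSingletonClass β] {μ : Measure E} {σ : E → β}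

lemma sum_map_real_singleton_mul [IsFiniteMeasure μ] (hσ : Measurable σ) (g : β → ℝ) :
    ∑ b, (μ.map σ).real {b} * g b = ∫ x, g (σ x) ∂μ := by
  rw [← integral_map hσ.aemeasurable (measurable_of_finite g).aestronglyMeasurable,
    integral_fintype Integrable.of_finite]
  simp only [smul_eq_mul]

lemma map_real_singleton_mem_stdSimplex [IsProbabilityMeasure μ] (hσ : Measurable σ) :
    (fun b => (μ.map σ).real {b}) ∈ stdSimplex ℝ β :=
  ⟨fun _ => measureReal_nonneg, by simpa using sum_map_real_singleton_mul (μ := μ) hσ fun _ => 1⟩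

/-- The partition is the disintegration of the coupling `π` over the values of `σ`. -/
lemma exists_isBalancedPartition_of_coupling {ι : Type*} [Fintype ι] [Nonempty ι]
    [IsFiniteMeasure μ] (hσ : Measurable σ) {π : ι × β → ℝ} (hπ : ∀ z, 0 ≤ π z)
    (hfst : ∀ j, ∑ b, π (j, b) = (Fintype.card ι : ℝ)⁻¹)
    (hsnd : ∀ b, ∑ j, π (j, b) = (μ.map σ).real {b}) :
    ∃ M : ι → E → ℝ, IsBalancedPartition μ M ∧ ∃ u : ι → β → ℝ, (∀ j x, M j x = u j (σ x)) ∧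
      ∀ j b, (μ.map σ).real {b} * u j b = π (j, b) := by
  choose u hu hπu using fun b => exists_mem_stdSimplex_mul_sum_eq fun j => hπ (j, b)
  have hmul (j : ι) (b : β) : (μ.map σ).real {b} * u b j = π (j, b) := by
    rw [← hsnd, mul_comm, hπu]
  refine ⟨fun j x => u (σ x) j, ⟨fun j => (measurable_of_finite fun b => u b j).comp hσ,
    fun j x => (hu (σ x)).1 j, fun x => (hu (σ x)).2, fun j => ?_⟩, fun j b => u b j,
    fun j x => rfl, hmul⟩
  rw [← sum_map_real_singleton_mul hσ fun b => u b j]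
  simp only [hmul, hfst]

end Quantizer

section Duality

variable {E : Type*} [MetricSpace E] [MeasurableSpace E] [OpensMeasurableSpace E]
  [SecondCountableTopology E] {μ : Measure E}

lemma exists_simpleFunc_integral_dist_le [IsFiniteMeasure μ] (hμ : HasFiniteMoment 1 μ) {δ : ℝ}
    (hδ : 0 < δ) : ∃ φ : SimpleFunc E E, ∫ x, dist (φ x) x ∂μ ≤ δ := by
  have ⟨x₀, _⟩ := hμ
  set φ : ℕ → SimpleFunc E E :=
    SimpleFunc.approxOn id measurable_id Set.univ x₀ (Set.mem_univ x₀)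
  have hlim : Tendsto (fun k => ∫ x, dist (φ k x) x ∂μ) atTop (nhds (∫ _, (0 : ℝ) ∂μ)) := by
    refine tendsto_integral_of_dominated_convergence (fun x => dist x x₀)
      (fun k => ((φ k).measurable.dist measurable_id).aestronglyMeasurable)
      (integrable_dist_left hμ x₀) (fun k => ae_of_all _ fun x => ?_) (ae_of_all _ fun x => ?_)
    · have := SimpleFunc.edist_approxOn_le measurable_id (Set.mem_univ x₀) x k
      rw [edist_dist, edist_dist, ENNReal.ofReal_le_ofReal_iff dist_nonneg] at this
      rwa [Real.norm_of_nonneg dist_nonneg, dist_comm x x₀]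
    · exact tendsto_iff_dist_tendsto_zero.1 <|
        SimpleFunc.tendsto_approxOn measurable_id (Set.mem_univ x₀) (x := x) (by simp)
  rw [integral_zero] at hlim
  obtain ⟨k, hk⟩ := (hlim.eventually (ge_mem_nhds hδ)).exists
  exact ⟨φ k, hk⟩

section Quantized

variable {ι β : Type*} [Fintype ι] [Nonempty ι] [MeasurableSpace β]
  [MeasurableSingletonClass β] {σ : E → β}

lemma integrable_dist_comp_of_finite [Finite β] [IsFiniteMeasure μ] (hμ : HasFiniteMoment 1 μ)
    (hσ : Measurable σ) (y : β → E) : Integrable (fun x => dist (y (σ x)) x) μ := by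
  have := Fintype.ofFinite β
  refine (integrable_finsetSum Finset.univ fun b _ => integrable_dist_left hμ (y b)).mono'
    (((measurable_of_finite y).comp hσ).dist measurable_id).aestronglyMeasurable
    (ae_of_all _ fun x => ?_)
  rw [Real.norm_of_nonneg dist_nonneg, dist_comm]
  exact Finset.single_le_sum (f := fun b => dist x (y b)) (fun b _ => dist_nonneg)
    (Finset.mem_univ (σ x))

variable [IsProbabilityMeasure μ]

lemma average_sub_sum_map_real_mul_le [Fintype β] (hμ : HasFiniteMoment 1 μ) (hσ : Measurable σ)
    (y : β → E) (X : ι → E) {f : E → ℝ} (hf : LipschitzWith 1 f) :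
    ∑ j, (Fintype.card ι : ℝ)⁻¹ * f (X j) - ∑ b, (μ.map σ).real {b} * f (y b) ≤
      lipDiscrepancy μ Finset.univ X / Fintype.card ι + ∫ x, dist (y (σ x)) x ∂μ := by
  have hfi := integrable_of_lipschitzWith hμ hf
  have hfσ : Integrable (fun x => f (y (σ x))) μ :=
    (Integrable.of_finite (μ := μ.map σ) (f := fun b => f (y b))).comp_measurable hσ
  have hsample : ∑ j, (Fintype.card ι : ℝ)⁻¹ * f (X j) - ∫ x, f x ∂μ ≤
      lipDiscrepancy μ Finset.univ X / Fintype.card ι := by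
    have hcard : (0 : ℝ) < Fintype.card ι := by exact_mod_cast Fintype.card_pos
    rw [le_div_iff₀ hcard, ← Finset.mul_sum, sub_mul, inv_mul_eq_div, div_mul_cancel₀ _ hcard.ne']
    simpa [centeredSum, mul_comm] using centeredSum_le_lipDiscrepancy hμ Finset.univ X hf
  have hquant : ∫ x, f x ∂μ - ∫ x, f (y (σ x)) ∂μ ≤ ∫ x, dist (y (σ x)) x ∂μ := by
    rw [← integral_sub hfi hfσ]
    refine integral_mono (hfi.sub hfσ) (integrable_dist_comp_of_finite hμ hσ y) fun x => ?_
    simpa [dist_comm] using (le_abs_self _).trans (hf.dist_le_mul x (y (σ x)))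
  rw [sum_map_real_singleton_mul hσ fun b => f (y b)]
  linarith

lemma exists_isBalancedPartition_partitionCost_le [Finite β] (hμ : HasFiniteMoment 1 μ)
    (hσ : Measurable σ) (y : β → E) (X : ι → E) :
    ∃ M : ι → E → ℝ, IsBalancedPartition μ M ∧ partitionCost μ M X ≤
      lipDiscrepancy μ Finset.univ X / Fintype.card ι + 2 * ∫ x, dist (y (σ x)) x ∂μ := by
  have := Fintype.ofFinite β
  have hunif : (fun _ : ι => (Fintype.card ι : ℝ)⁻¹) ∈ stdSimplex ℝ ι :=
    ⟨fun _ => by positivity, by simp⟩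
  obtain ⟨π, hπ, hfst, hsnd, hcost⟩ := exists_coupling_of_forall_lipschitzWith hunif
    (map_real_singleton_mem_stdSimplex hσ)
    fun f hf => average_sub_sum_map_real_mul_le hμ hσ y X hf
  obtain ⟨M, hM, u, hMu, hu⟩ := exists_isBalancedPartition_of_coupling hσ hπ.1 hfst hsnd
  refine ⟨M, hM, ?_⟩
  have hcentres : ∫ x, ∑ j, M j x * dist (X j) (y (σ x)) ∂μ = ∑ z, π z * dist (X z.1) (y z.2) := by
    simp only [hMu]
    rw [← sum_map_real_singleton_mul hσ fun b => ∑ j, u j b * dist (X j) (y b),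
      Fintype.sum_prod_type_right]
    simp only [Finset.mul_sum, ← mul_assoc, hu]
  have hint : Integrable (fun x => ∑ j, M j x * dist (X j) (y (σ x))) μ := by
    simp only [hMu]
    exact (Integrable.of_finite (μ := μ.map σ)
      (f := fun b => ∑ j, u j b * dist (X j) (y b))).comp_measurable hσ
  have hdist := integrable_dist_comp_of_finite hμ hσ y
  calc partitionCost μ M X
      ≤ ∫ x, (∑ j, M j x * dist (X j) (y (σ x)) + dist (y (σ x)) x) ∂μ := by
        refine integral_mono (integrable_finsetSum _ fun j _ => hM.integrable_mul_dist hμ j (X j))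
          (hint.add hdist) fun x => ?_
        calc ∑ j, M j x * dist x (X j)
            ≤ ∑ j, M j x * (dist (X j) (y (σ x)) + dist (y (σ x)) x) := by
              gcongr with j
              · exact hM.nonneg j x
              · rw [dist_comm]; exact dist_triangle _ _ _
          _ = ∑ j, M j x * dist (X j) (y (σ x)) + dist (y (σ x)) x := by
              simp only [mul_add, Finset.sum_add_distrib, ← Finset.sum_mul, hM.sum_eq_one, one_mul]
    _ = ∑ z, π z * dist (X z.1) (y z.2) + ∫ x, dist (y (σ x)) x ∂μ := by
        rw [integral_add hint hdist, hcentres]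
    _ ≤ _ := by linarith

end Quantized

variable [IsProbabilityMeasure μ]

lemma exists_isBalancedPartition_partitionCost_le_add {ι : Type*} [Fintype ι] [Nonempty ι]
    (hμ : HasFiniteMoment 1 μ) (X : ι → E) {δ : ℝ} (hδ : 0 < δ) :
    ∃ M : ι → E → ℝ, IsBalancedPartition μ M ∧ partitionCost μ M X ≤
      lipDiscrepancy μ Finset.univ X / Fintype.card ι + δ := by
  obtain ⟨φ, hφ⟩ := exists_simpleFunc_integral_dist_le hμ (half_pos hδ)
  obtain ⟨M, hM, hcost⟩ := exists_isBalancedPartition_partitionCost_le hμ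
    (σ := fun x => (⟨φ x, φ.mem_range_self x⟩ : φ.range)) φ.measurable.subtype_mk
    (fun y => y.1) X
  exact ⟨M, hM, by dsimp only at hcost; linarith⟩

lemma Wp_one_empiricalMeasure_le_ofReal {n : ℕ} (hn : n ≠ 0) (hμ : HasFiniteMoment 1 μ)
    (X : Fin n → E) :
    Wp 1 (empiricalMeasure n X) μ ≤ ENNReal.ofReal (lipDiscrepancy μ Finset.univ X / n) := by
  have : NeZero n := ⟨hn⟩
  refine ENNReal.le_of_forall_pos_le_add fun δ hδ _ => ?_
  obtain ⟨M, hM, hcost⟩ := exists_isBalancedPartition_partitionCost_le_add hμ X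
    (NNReal.coe_pos.2 hδ)
  rw [Fintype.card_fin] at hcost
  calc Wp 1 (empiricalMeasure n X) μ ≤ ENNReal.ofReal (partitionCost μ M X) :=
        hM.Wp_one_empiricalMeasure_le hμ X
    _ ≤ ENNReal.ofReal (lipDiscrepancy μ Finset.univ X / n + δ) := ENNReal.ofReal_le_ofReal hcost
    _ ≤ ENNReal.ofReal (lipDiscrepancy μ Finset.univ X / n) + δ := by
        simpa using ENNReal.ofReal_add_le (q := (δ : ℝ))

theorem Wp_one_empiricalMeasure_eq {n : ℕ} (hn : n ≠ 0) (hμ : HasFiniteMoment 1 μ)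
    (X : Fin n → E) :
    Wp 1 (empiricalMeasure n X) μ = ENNReal.ofReal (lipDiscrepancy μ Finset.univ X / n) := by
  have hle := Wp_one_empiricalMeasure_le_ofReal hn hμ X
  refine hle.antisymm ?_
  have hn' : (0 : ℝ) < n := by positivity
  have hfin : Wp 1 (empiricalMeasure n X) μ ≠ ∞ := ne_top_of_le_ne_top ENNReal.ofReal_ne_top hle
  rw [ENNReal.ofReal_le_iff_le_toReal hfin, div_le_iff₀ hn']
  refine lipDiscrepancy_le fun f hf => ?_
  have hfm := hf.continuous.stronglyMeasurable
  have hsum : centeredSum μ Finset.univ f X =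
      (∫ x, f x ∂empiricalMeasure n X - ∫ x, f x ∂μ) * n := by
    rw [integral_empiricalMeasure X hfm, sub_mul, div_mul_cancel₀ _ hn'.ne']
    simp [centeredSum, mul_comm]
  rw [hsum, mul_le_mul_iff_of_pos_right hn', ← ENNReal.ofReal_le_iff_le_toReal hfin]
  exact ofReal_integral_sub_integral_le_Wp_one hf (integrable_empiricalMeasure X hfm)
    (integrable_of_lipschitzWith hμ hf)

lemma expWp_one_eq {n : ℕ} (hn : n ≠ 0) (hμ : HasFiniteMoment 1 μ) :
    expWp 1 μ n =
      ENNReal.ofReal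
        ((∫ X, lipDiscrepancy μ Finset.univ X ∂Measure.pi fun _ : Fin n => μ) / n) := by
  simp only [expWp, sampleMeasure, Wp_one_empiricalMeasure_eq hn hμ]
  rw [← integral_div, ofReal_integral_eq_lintegral_ofReal
    ((integrable_lipDiscrepancy hμ _).div_const _)
    (ae_of_all _ fun X => div_nonneg (lipDiscrepancy_nonneg hμ _ X) n.cast_nonneg)]

lemma unifQuantErr_one_le {n : ℕ} (hn : n ≠ 0) (hμ : HasFiniteMoment 1 μ) (X : Fin n → E) :
    unifQuantErr 1 n μ ≤ ENNReal.ofReal (lipDiscrepancy μ Finset.univ X / n) :=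
  (iInf_le _ X).trans_eq ((Wp_comm 1 _ _).trans (Wp_one_empiricalMeasure_eq hn hμ X))

lemma unifQuantErr_one_ne_top {n : ℕ} (hn : n ≠ 0) (hμ : HasFiniteMoment 1 μ) :
    unifQuantErr 1 n μ ≠ ∞ :=
  have ⟨x₀, _⟩ := hμ
  ne_top_of_le_ne_top ENNReal.ofReal_ne_top (unifQuantErr_one_le hn hμ fun _ => x₀)

lemma card_mul_unifQuantErr_one_le {ι : Type*} {A : Finset ι} (hA : A.Nonempty)
    (hμ : HasFiniteMoment 1 μ) (X : ι → E) :
    A.card * (unifQuantErr 1 A.card μ).toReal ≤ lipDiscrepancy μ A X := by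
  set e := A.equivFin.symm
  have hsum : lipDiscrepancy μ Finset.univ (fun i => X (e i)) = lipDiscrepancy μ A X := by
    refine iSup_congr fun f => ?_
    rw [centeredSum, centeredSum, ← Finset.sum_coe_sort A]
    exact e.sum_comp fun i : A => f.1 (X i) - ∫ y, f.1 y ∂μ
  have hcard : (0 : ℝ) < A.card := by exact_mod_cast hA.card_pos
  rw [mul_comm, ← le_div_iff₀ hcard, ← hsum]
  exact ENNReal.toReal_le_of_le_ofReal (div_nonneg (lipDiscrepancy_nonneg hμ _ _) hcard.le)
    (unifQuantErr_one_le hA.card_ne_zero hμ _)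

lemma exists_isBalancedPartition_partitionCost_le_of_lt {n : ℕ} (hn : n ≠ 0)
    (hμ : HasFiniteMoment 1 μ) {c : ℝ} (hc : (unifQuantErr 1 n μ).toReal < c) :
    ∃ (z : Fin n → E) (M : Fin n → E → ℝ), IsBalancedPartition μ M ∧ partitionCost μ M z ≤ c := by
  have : NeZero n := ⟨hn⟩
  obtain ⟨z, hz⟩ := iInf_lt_iff.1
    ((ENNReal.lt_ofReal_iff_toReal_lt (unifQuantErr_one_ne_top hn hμ)).2 hc)
  rw [Wp_comm, Wp_one_empiricalMeasure_eq hn hμ] at hz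
  have hlt := ((ENNReal.ofReal_lt_ofReal_iff_of_nonneg
    (div_nonneg (lipDiscrepancy_nonneg hμ _ z) n.cast_nonneg)).1 hz)
  obtain ⟨M, hM, hcost⟩ := exists_isBalancedPartition_partitionCost_le_add hμ z (sub_pos.2 hlt)
  exact ⟨z, M, hM, by simpa using hcost⟩

end Duality

section CenteredSum

variable {E ι : Type*} [MeasurableSpace E] {μ : Measure E}

lemma centeredSum_sub_centeredSum (A : Finset ι) (f : E → ℝ) (X X' : ι → E) :
    centeredSum μ A f X - centeredSum μ A f X' = ∑ i ∈ A, (f (X i) - f (X' i)) := by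
  simp only [centeredSum, ← Finset.sum_sub_distrib, sub_sub_sub_cancel_right]

lemma centeredSum_sum_mul {κ : Type*} [Fintype κ] {g : κ → E → ℝ} (hg : ∀ l, Integrable (g l) μ)
    (a : κ → ℝ) (A : Finset ι) (X : ι → E) :
    centeredSum μ A (fun x => ∑ l, a l * g l x) X = ∑ l, a l * centeredSum μ A (g l) X := by
  simp only [centeredSum, integral_finsetSum _ fun l _ => (hg l).const_mul (a l),
    integral_const_mul, ← Finset.sum_sub_distrib, Finset.mul_sum, mul_sub]
  exact Finset.sum_comm

lemma centeredSum_piecewise_univ [Fintype ι] [DecidableEq ι] (A : Finset ι) (f : E → ℝ)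
    (X Y : ι → E) : centeredSum μ Finset.univ f (A.piecewise X Y) =
      centeredSum μ A f X + centeredSum μ Aᶜ f Y := by
  rw [centeredSum, ← Finset.sum_add_sum_compl A]
  refine congrArg₂ _ (Finset.sum_congr rfl fun i hi => ?_) (Finset.sum_congr rfl fun i hi => ?_)
  · rw [Finset.piecewise_eq_of_mem _ _ _ hi]
  · rw [Finset.piecewise_eq_of_notMem _ _ _ (Finset.mem_compl.1 hi)]

variable [Fintype ι] [IsProbabilityMeasure μ]

lemma memLp_centeredSum {p : ℝ≥0∞} {h : E → ℝ} (hh : MemLp h p μ) (A : Finset ι) :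
    MemLp (centeredSum μ A h) p (Measure.pi fun _ => μ) :=
  memLp_finsetSum A fun i _ =>
    (hh.sub (memLp_const _)).comp_measurePreserving (measurePreserving_eval (fun _ : ι => μ) i)

lemma integrable_centeredSum {h : E → ℝ} (hh : Integrable h μ) (A : Finset ι) :
    Integrable (centeredSum μ A h) (Measure.pi fun _ => μ) :=
  memLp_one_iff_integrable.1 (memLp_centeredSum (memLp_one_iff_integrable.2 hh) A)

lemma integral_centeredSum {h : E → ℝ} (hh : Integrable h μ) (A : Finset ι) :
    ∫ X, centeredSum μ A h X ∂(Measure.pi fun _ => μ) = 0 := by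
  have heval (i : ι) : Integrable (fun X : ι → E => h (X i)) (Measure.pi fun _ => μ) :=
    integrable_comp_eval (μ := fun _ : ι => μ) hh
  have hterm (i : ι) :
      Integrable (fun X : ι → E => h (X i) - ∫ y, h y ∂μ) (Measure.pi fun _ => μ) :=
    (heval i).sub (integrable_const _)
  simp only [centeredSum, integral_finsetSum A fun i _ => hterm i]
  refine Finset.sum_eq_zero fun i _ => ?_
  rw [integral_sub (heval i) (integrable_const _),
    integral_comp_eval (μ := fun _ : ι => μ) hh.aestronglyMeasurable, integral_const,
    probReal_univ, one_smul, sub_self]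

lemma variance_centeredSum {h : E → ℝ} (hh : MemLp h 2 μ) (A : Finset ι) :
    ProbabilityTheory.variance (centeredSum μ A h) (Measure.pi fun _ => μ) =
      A.card * ProbabilityTheory.variance h μ := by
  classical
  set Y : ι → E → ℝ := fun i => if i ∈ A then fun x => h x - ∫ y, h y ∂μ else 0 with hY
  have hYL2 (i : ι) : MemLp (Y i) 2 μ := by
    by_cases hi : i ∈ A
    · simp only [hY, if_pos hi]
      exact hh.sub (memLp_const _)
    · simpa only [hY, if_neg hi] using MemLp.zero
  have hsum : centeredSum μ A h = ∑ i, fun X : ι → E => Y i (X i) := by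
    ext X
    rw [Finset.sum_apply, centeredSum, ← Finset.sum_subset (Finset.subset_univ A)]
    · exact Finset.sum_congr rfl fun i hi => by simp only [hY, if_pos hi]
    · intro i _ hi
      simp only [hY, if_neg hi, Pi.zero_apply]
  have hvar (i : ι) : ProbabilityTheory.variance (Y i) μ =
      if i ∈ A then ProbabilityTheory.variance h μ else 0 := by
    by_cases hi : i ∈ A
    · simp only [hY, if_pos hi, ProbabilityTheory.variance_sub_const hh.aestronglyMeasurable]
    · simp only [hY, if_neg hi, ProbabilityTheory.variance_zero]
  rw [hsum, ProbabilityTheory.variance_sum_pi hYL2]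
  simp [hvar]

lemma integral_abs_le_sqrt_variance {h : E → ℝ} (hh : MemLp h 2 μ) (h0 : ∫ x, h x ∂μ = 0) :
    ∫ x, |h x| ∂μ ≤ √(ProbabilityTheory.variance h μ) := by
  refine Real.le_sqrt_of_sq_le ?_
  have habs := ProbabilityTheory.variance_nonneg |h| μ
  rw [ProbabilityTheory.variance_eq_sub hh.abs] at habs
  rw [ProbabilityTheory.variance_of_integral_eq_zero hh.aemeasurable h0]
  simpa only [Pi.pow_apply, Pi.abs_apply, sq_abs, sub_nonneg] using habs

lemma variance_le_integral_of_le_one {h : E → ℝ} (hm : Measurable h) (h0 : ∀ x, 0 ≤ h x)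
    (h1 : ∀ x, h x ≤ 1) : ProbabilityTheory.variance h μ ≤ ∫ x, h x ∂μ := by
  have hint : Integrable h μ := (integrable_const (1 : ℝ)).mono' hm.aestronglyMeasurable <|
    ae_of_all _ fun x => by simpa only [Real.norm_of_nonneg (h0 x)] using h1 x
  refine (ProbabilityTheory.variance_le_expectation_sq hm.aestronglyMeasurable).trans ?_
  refine integral_mono_of_nonneg (ae_of_all _ fun x => sq_nonneg _) hint (ae_of_all _ fun x => ?_)
  exact pow_le_of_le_one (h0 x) (h1 x) two_ne_zero

lemma integral_abs_centeredSum_le {h : E → ℝ} (hm : Measurable h) (h0 : ∀ x, 0 ≤ h x)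
    (h1 : ∀ x, h x ≤ 1) (A : Finset ι) :
    ∫ X, |centeredSum μ A h X| ∂(Measure.pi fun _ => μ) ≤ √(A.card * ∫ x, h x ∂μ) := by
  have hL2 : MemLp h 2 μ := MemLp.of_bound hm.aestronglyMeasurable 1 <|
    ae_of_all _ fun x => by simpa only [Real.norm_of_nonneg (h0 x)] using h1 x
  refine (integral_abs_le_sqrt_variance (memLp_centeredSum hL2 A)
    (integral_centeredSum (hL2.integrable one_le_two) A)).trans (Real.sqrt_le_sqrt ?_)
  rw [variance_centeredSum hL2]
  exact mul_le_mul_of_nonneg_left (variance_le_integral_of_le_one hm h0 h1) (Nat.cast_nonneg _)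

end CenteredSum

section Overlap

variable {E ι κ : Type*} [MeasurableSpace E] [Fintype ι] [Fintype κ] {μ : Measure E}
  {U : ι → E → ℝ} {V : κ → E → ℝ}

/-- The mass shared by the `j`-th part of `U` and the `l`-th part of `V`. -/
noncomputable def overlap (μ : Measure E) (U : ι → E → ℝ) (V : κ → E → ℝ) (j : ι) (l : κ) : ℝ :=
  ∫ x, U j x * V l x ∂μ

lemma overlap_nonneg (hU : IsBalancedPartition μ U) (hV : IsBalancedPartition μ V) (j : ι)
    (l : κ) : 0 ≤ overlap μ U V j l :=
  integral_nonneg fun x => mul_nonneg (hU.nonneg j x) (hV.nonneg l x)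

lemma sum_overlap_right [IsFiniteMeasure μ] (hU : IsBalancedPartition μ U)
    (hV : IsBalancedPartition μ V) (j : ι) :
    ∑ l, overlap μ U V j l = (Fintype.card ι : ℝ)⁻¹ := by
  simp only [overlap]
  rw [← integral_finsetSum _ fun l _ => hU.integrable_mul j (hV.integrable l), ← hU.integral_eq j]
  simp only [← Finset.mul_sum, hV.sum_eq_one, mul_one]

lemma sum_overlap_left [IsFiniteMeasure μ] (hU : IsBalancedPartition μ U)
    (hV : IsBalancedPartition μ V) (l : κ) :
    ∑ j, overlap μ U V j l = (Fintype.card κ : ℝ)⁻¹ := by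
  simpa only [overlap, mul_comm] using sum_overlap_right hV hU l

/-- The partition obtained from `M` by handing the fraction of the `j`-th part prescribed by the
overlap of `U j` and `V l` over to the `l`-th part. -/
noncomputable def transferPartition (μ : Measure E) (U : ι → E → ℝ) (V : κ → E → ℝ)
    (M : ι → E → ℝ) (l : κ) (x : E) : ℝ :=
  ∑ j, Fintype.card ι * overlap μ U V j l * M j x

lemma IsBalancedPartition.transferPartition [IsFiniteMeasure μ] {M : ι → E → ℝ}
    (hM : IsBalancedPartition μ M) (hU : IsBalancedPartition μ U) (hV : IsBalancedPartition μ V) :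
    IsBalancedPartition μ (transferPartition μ U V M) where
  measurable l := Finset.measurable_sum _ fun j _ => (hM.measurable j).const_mul _
  nonneg l x := Finset.sum_nonneg fun j _ =>
    mul_nonneg (mul_nonneg (Nat.cast_nonneg _) (overlap_nonneg hU hV j l)) (hM.nonneg j x)
  sum_eq_one x := by
    simp only [_root_.transferPartition]
    rw [Finset.sum_comm, ← hM.sum_eq_one x]
    refine Finset.sum_congr rfl fun j _ => ?_
    have : Nonempty ι := ⟨j⟩
    rw [← Finset.sum_mul, ← Finset.mul_sum, sum_overlap_right hU hV, mul_inv_cancel₀ (by simp),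
      one_mul]
  integral_eq l := by
    simp only [_root_.transferPartition]
    rw [integral_finsetSum _ fun j _ => (hM.integrable j).const_mul _,
      ← sum_overlap_left hU hV l]
    refine Finset.sum_congr rfl fun j _ => ?_
    have : Nonempty ι := ⟨j⟩
    rw [integral_const_mul, hM.integral_eq, mul_comm, inv_mul_cancel_left₀ (by simp)]

end Overlap

section Transfer

variable {E α ι κ : Type*} [MetricSpace E] [MeasurableSpace E] [Fintype ι] [Fintype κ]
  {μ : Measure E} {U M : ι → E → ℝ} {V : κ → E → ℝ}

lemma sum_overlap_mul_dist_le [OpensMeasurableSpace E] [IsFiniteMeasure μ]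
    (hμ : HasFiniteMoment 1 μ) (hU : IsBalancedPartition μ U) (hV : IsBalancedPartition μ V)
    (z : ι → E) (z' : κ → E) :
    ∑ j, ∑ l, overlap μ U V j l * dist (z j) (z' l) ≤
      partitionCost μ U z + partitionCost μ V z' := by
  have hUint := integrable_finsetSum Finset.univ fun j _ => hU.integrable_mul_dist hμ j (z j)
  have hVint := integrable_finsetSum Finset.univ fun l _ => hV.integrable_mul_dist hμ l (z' l)
  have hterm (j : ι) (l : κ) : Integrable (fun x => U j x * V l x * dist (z j) (z' l)) μ :=
    (hU.integrable_mul j (hV.integrable l)).mul_const _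
  have hpoint (x : E) : ∑ j, ∑ l, U j x * V l x * dist (z j) (z' l) ≤
      ∑ j, U j x * dist x (z j) + ∑ l, V l x * dist x (z' l) :=
    calc ∑ j, ∑ l, U j x * V l x * dist (z j) (z' l)
        ≤ ∑ j, ∑ l, (U j x * dist x (z j) * V l x + U j x * (V l x * dist x (z' l))) := by
          refine Finset.sum_le_sum fun j _ => Finset.sum_le_sum fun l _ => ?_
          have := mul_le_mul_of_nonneg_left (dist_triangle_left (z j) (z' l) x)
            (mul_nonneg (hU.nonneg j x) (hV.nonneg l x))
          linarith
      _ = ∑ j, U j x * dist x (z j) + ∑ l, V l x * dist x (z' l) := by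
          simp only [Finset.sum_add_distrib, ← Finset.mul_sum, ← Finset.sum_mul, hU.sum_eq_one,
            hV.sum_eq_one, mul_one, one_mul]
  calc ∑ j, ∑ l, overlap μ U V j l * dist (z j) (z' l)
      = ∫ x, ∑ j, ∑ l, U j x * V l x * dist (z j) (z' l) ∂μ := by
        rw [integral_finsetSum _ fun j _ => integrable_finsetSum _ fun l _ => hterm j l]
        refine Finset.sum_congr rfl fun j _ => ?_
        rw [integral_finsetSum _ fun l _ => hterm j l]
        simp only [integral_mul_const, overlap]
    _ ≤ ∫ x, (∑ j, U j x * dist x (z j) + ∑ l, V l x * dist x (z' l)) ∂μ :=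
        integral_mono (integrable_finsetSum _ fun j _ => integrable_finsetSum _ fun l _ =>
          hterm j l) (hUint.add hVint) hpoint
    _ = partitionCost μ U z + partitionCost μ V z' := integral_add hUint hVint

/-- The total displacement, weighted by the fluctuations of the parts of `M`, when these parts
move from the centres `z` to the centres `z'` along the overlaps of `U` and `V`. -/
noncomputable def transferFluctuation (μ : Measure E) (U : ι → E → ℝ) (V : κ → E → ℝ)
    (M : ι → E → ℝ) (z : ι → E) (z' : κ → E) (A : Finset α) (X : α → E) : ℝ :=
  ∑ j, ∑ l, Fintype.card ι * overlap μ U V j l * dist (z j) (z' l) * |centeredSum μ A (M j) X|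

lemma sum_mul_centeredSum_le_transfer [IsFiniteMeasure μ] (hU : IsBalancedPartition μ U)
    (hV : IsBalancedPartition μ V) (hM : IsBalancedPartition μ M) {f : E → ℝ}
    (hf : LipschitzWith 1 f) (z : ι → E) (z' : κ → E) (A : Finset α) (X : α → E) :
    ∑ j, f (z j) * centeredSum μ A (M j) X ≤ transferFluctuation μ U V M z z' A X +
      ∑ l, f (z' l) * centeredSum μ A (transferPartition μ U V M l) X := by
  have hsplit (j : ι) : ∑ l, (Fintype.card ι : ℝ) * overlap μ U V j l = 1 := by
    have : Nonempty ι := ⟨j⟩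
    rw [← Finset.mul_sum, sum_overlap_right hU hV, mul_inv_cancel₀ (by simp)]
  have htransfer (l : κ) : centeredSum μ A (transferPartition μ U V M l) X =
      ∑ j, Fintype.card ι * overlap μ U V j l * centeredSum μ A (M j) X :=
    centeredSum_sum_mul hM.integrable _ A X
  calc ∑ j, f (z j) * centeredSum μ A (M j) X
      = ∑ j, ∑ l, Fintype.card ι * overlap μ U V j l * (f (z j) * centeredSum μ A (M j) X) := by
        simp only [← Finset.sum_mul, hsplit, one_mul]
    _ ≤ ∑ j, ∑ l, (Fintype.card ι * overlap μ U V j l * dist (z j) (z' l) *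
          |centeredSum μ A (M j) X| +
          f (z' l) * (Fintype.card ι * overlap μ U V j l * centeredSum μ A (M j) X)) := by
        refine Finset.sum_le_sum fun j _ => Finset.sum_le_sum fun l _ => ?_
        have hweight := mul_nonneg (Nat.cast_nonneg (Fintype.card ι)) (overlap_nonneg hU hV j l)
        have hmove : (f (z j) - f (z' l)) * centeredSum μ A (M j) X ≤
            dist (z j) (z' l) * |centeredSum μ A (M j) X| := by
          refine (le_abs_self _).trans ?_
          rw [abs_mul]
          refine mul_le_mul_of_nonneg_right ?_ (abs_nonneg _)
          simpa [Real.dist_eq] using hf.dist_le_mul (z j) (z' l)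
        linarith [mul_le_mul_of_nonneg_left hmove hweight]
    _ = _ := by
        simp only [Finset.sum_add_distrib, transferFluctuation]
        rw [Finset.sum_comm (f := fun j l => f (z' l) * _)]
        simp only [← Finset.mul_sum, htransfer]

variable [Fintype α] [IsProbabilityMeasure μ]

lemma integrable_transferFluctuation (hM : IsBalancedPartition μ M) (z : ι → E) (z' : κ → E)
    (A : Finset α) :
    Integrable (transferFluctuation μ U V M z z' A) (Measure.pi fun _ => μ) :=
  integrable_finsetSum _ fun j _ => integrable_finsetSum _ fun _ _ =>
    (integrable_centeredSum (hM.integrable j) A).abs.const_mul _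

lemma integral_transferFluctuation_le [OpensMeasurableSpace E] (hμ : HasFiniteMoment 1 μ)
    (hU : IsBalancedPartition μ U) (hV : IsBalancedPartition μ V) (hM : IsBalancedPartition μ M)
    (z : ι → E) (z' : κ → E) (A : Finset α) :
    ∫ X, transferFluctuation μ U V M z z' A X ∂(Measure.pi fun _ => μ) ≤
      √(A.card * Fintype.card ι) * (partitionCost μ U z + partitionCost μ V z') := by
  have hfluct (j : ι) : Fintype.card ι * ∫ X, |centeredSum μ A (M j) X| ∂(Measure.pi fun _ => μ) ≤
      √(A.card * Fintype.card ι) := by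
    have : Nonempty ι := ⟨j⟩
    have hcard : (Fintype.card ι : ℝ) ≠ 0 := by simp
    refine (mul_le_mul_of_nonneg_left (integral_abs_centeredSum_le (hM.measurable j) (hM.nonneg j)
      (hM.le_one j) A) (Nat.cast_nonneg _)).trans_eq ?_
    rw [hM.integral_eq, ← Real.sqrt_sq (Nat.cast_nonneg (α := ℝ) (Fintype.card ι)),
      ← Real.sqrt_mul (sq_nonneg _), Real.sqrt_sq (Nat.cast_nonneg _)]
    congr 1
    field_simp
  calc ∫ X, transferFluctuation μ U V M z z' A X ∂(Measure.pi fun _ => μ)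
      = ∑ j, ∑ l, overlap μ U V j l * dist (z j) (z' l) *
          (Fintype.card ι * ∫ X, |centeredSum μ A (M j) X| ∂(Measure.pi fun _ => μ)) := by
        simp only [transferFluctuation]
        rw [integral_finsetSum _ fun j _ => integrable_finsetSum _ fun _ _ =>
          (integrable_centeredSum (hM.integrable j) A).abs.const_mul _]
        refine Finset.sum_congr rfl fun j _ => ?_
        rw [integral_finsetSum _ fun _ _ =>
          (integrable_centeredSum (hM.integrable j) A).abs.const_mul _]
        refine Finset.sum_congr rfl fun l _ => ?_
        rw [integral_const_mul]
        ring
    _ ≤ ∑ j, ∑ l, overlap μ U V j l * dist (z j) (z' l) * √(A.card * Fintype.card ι) :=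
        Finset.sum_le_sum fun j _ => Finset.sum_le_sum fun l _ =>
          mul_le_mul_of_nonneg_left (hfluct j) (mul_nonneg (overlap_nonneg hU hV j l) dist_nonneg)
    _ ≤ √(A.card * Fintype.card ι) * (partitionCost μ U z + partitionCost μ V z') := by
        simp only [← Finset.sum_mul]
        rw [mul_comm]
        exact mul_le_mul_of_nonneg_left (sum_overlap_mul_dist_le hμ hU hV z z')
          (Real.sqrt_nonneg _)

end Transfer

section Chaining

variable {E α : Type*} [MetricSpace E] [MeasurableSpace E] [OpensMeasurableSpace E] [Fintype α]
  {μ : Measure E} [IsProbabilityMeasure μ] {ι : ℕ → Type*} [∀ k, Fintype (ι k)]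
  {U : ∀ k, ι k → E → ℝ}

lemma exists_sum_mul_centeredSum_le_chain [Subsingleton (ι 0)] (hμ : HasFiniteMoment 1 μ)
    (hU : ∀ k, IsBalancedPartition μ (U k)) (z : ∀ k, ι k → E) (A : Finset α) (K : ℕ)
    {M : ι K → E → ℝ} (hM : IsBalancedPartition μ M) :
    ∃ G : (α → E) → ℝ, Integrable G (Measure.pi fun _ => μ) ∧
      ∫ X, G X ∂(Measure.pi fun _ => μ) ≤ ∑ i ∈ Finset.range K,
        √(A.card * Fintype.card (ι (i + 1))) *
          (partitionCost μ (U (i + 1)) (z (i + 1)) + partitionCost μ (U i) (z i)) ∧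
      ∀ f : E → ℝ, LipschitzWith 1 f →
        ∀ X, ∑ j, f (z K j) * centeredSum μ A (M j) X ≤ G X := by
  induction K with
  | zero =>
    refine ⟨0, integrable_zero _ _ _, by simp, fun f _ X => ?_⟩
    have hM1 (j : ι 0) (x : E) : M j x = 1 := by
      rw [← hM.sum_eq_one x, Fintype.sum_subsingleton _ j]
    simp [centeredSum, hM1]
  | succ K ih =>
    obtain ⟨G, hGint, hGle, hG⟩ := ih (hM.transferPartition (hU (K + 1)) (hU K))
    have hTint := integrable_transferFluctuation (U := U (K + 1)) (V := U K) hM (z (K + 1)) (z K) A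
    refine ⟨_, hGint.add hTint, ?_, fun f hf X => ?_⟩
    · rw [integral_add' hGint hTint, Finset.sum_range_succ]
      exact add_le_add hGle (integral_transferFluctuation_le hμ (hU _) (hU _) hM _ _ A)
    · refine (sum_mul_centeredSum_le_transfer (hU (K + 1)) (hU K) hM hf _ (z K) A X).trans ?_
      rw [Pi.add_apply, add_comm (G X)]
      exact add_le_add_right (hG f hf X) _

end Chaining

section PartitionApproximation

variable {E α ι : Type*} [MetricSpace E] [MeasurableSpace E] [Fintype ι] {μ : Measure E}
  {U : ι → E → ℝ}

lemma abs_sub_sum_mul_le (hU : IsBalancedPartition μ U) {f : E → ℝ} (hf : LipschitzWith 1 f)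
    (z : ι → E) (x : E) : |f x - ∑ j, f (z j) * U j x| ≤ ∑ j, U j x * dist x (z j) := by
  have hsplit : f x - ∑ j, f (z j) * U j x = ∑ j, U j x * (f x - f (z j)) := by
    simp only [mul_sub, Finset.sum_sub_distrib, ← Finset.sum_mul, hU.sum_eq_one, one_mul,
      mul_comm (f _)]
  rw [hsplit]
  refine (Finset.abs_sum_le_sum_abs _ _).trans (Finset.sum_le_sum fun j _ => ?_)
  rw [abs_mul, abs_of_nonneg (hU.nonneg j x)]
  refine mul_le_mul_of_nonneg_left ?_ (hU.nonneg j x)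
  simpa [Real.dist_eq] using hf.dist_le_mul x (z j)

lemma centeredSum_le_sum_mul_centeredSum_add [OpensMeasurableSpace E] [IsProbabilityMeasure μ]
    (hμ : HasFiniteMoment 1 μ) (hU : IsBalancedPartition μ U) {f : E → ℝ}
    (hf : LipschitzWith 1 f) (z : ι → E) (A : Finset α) (X : α → E) :
    centeredSum μ A f X ≤ ∑ j, f (z j) * centeredSum μ A (U j) X +
      ∑ i ∈ A, (∑ j, U j (X i) * dist (X i) (z j) + partitionCost μ U z) := by
  have hclose := abs_sub_sum_mul_le hU hf z
  have hgint : Integrable (fun x => ∑ j, f (z j) * U j x) μ :=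
    integrable_finsetSum _ fun j _ => (hU.integrable j).const_mul _
  have hDint : Integrable (fun x => ∑ j, U j x * dist x (z j)) μ :=
    integrable_finsetSum _ fun j _ => hU.integrable_mul_dist hμ j (z j)
  have hmean : ∫ y, ∑ j, f (z j) * U j y ∂μ ≤ ∫ y, f y ∂μ + partitionCost μ U z := by
    rw [partitionCost, ← integral_add (integrable_of_lipschitzWith hμ hf) hDint]
    refine integral_mono hgint ((integrable_of_lipschitzWith hμ hf).add hDint) fun x => ?_
    linarith [neg_le_of_abs_le (hclose x), Pi.add_apply f (fun x => ∑ j, U j x * dist x (z j)) x]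
  rw [← centeredSum_sum_mul hU.integrable, centeredSum, centeredSum, ← Finset.sum_add_distrib]
  refine Finset.sum_le_sum fun i _ => ?_
  linarith [le_of_abs_le (hclose (X i))]

end PartitionApproximation

section UpperBound

variable {E α : Type*} [MetricSpace E] [MeasurableSpace E] [OpensMeasurableSpace E]
  [SecondCountableTopology E] [Fintype α] {μ : Measure E} [IsProbabilityMeasure μ]

theorem integral_lipDiscrepancy_le_chain {ι : ℕ → Type*} [∀ k, Fintype (ι k)] [Subsingleton (ι 0)]
    {U : ∀ k, ι k → E → ℝ} (hμ : HasFiniteMoment 1 μ) (hU : ∀ k, IsBalancedPartition μ (U k))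
    (z : ∀ k, ι k → E) (A : Finset α) (K : ℕ) :
    ∫ X, lipDiscrepancy μ A X ∂(Measure.pi fun _ => μ) ≤
      2 * A.card * partitionCost μ (U K) (z K) + ∑ i ∈ Finset.range K,
        √(A.card * Fintype.card (ι (i + 1))) *
          (partitionCost μ (U (i + 1)) (z (i + 1)) + partitionCost μ (U i) (z i)) := by
  obtain ⟨G, hGint, hGle, hG⟩ := exists_sum_mul_centeredSum_le_chain hμ hU z A K (hU K)
  set D : E → ℝ := fun x => ∑ j, U K j x * dist x (z K j)
  have hDint : Integrable D μ :=
    integrable_finsetSum _ fun j _ => (hU K).integrable_mul_dist hμ j (z K j)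
  have hDeval (i : α) : Integrable (fun X : α → E => D (X i)) (Measure.pi fun _ => μ) :=
    integrable_comp_eval (μ := fun _ : α => μ) hDint
  have hterm (i : α) : Integrable (fun X : α → E => D (X i) + partitionCost μ (U K) (z K))
      (Measure.pi fun _ => μ) := (hDeval i).add (integrable_const _)
  have hrest := integrable_finsetSum A fun i _ => hterm i
  calc ∫ X, lipDiscrepancy μ A X ∂(Measure.pi fun _ => μ)
      ≤ ∫ X, (G X + ∑ i ∈ A, (D (X i) + partitionCost μ (U K) (z K)))
          ∂(Measure.pi fun _ => μ) :=
        integral_mono (integrable_lipDiscrepancy hμ A) (hGint.add hrest) fun X =>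
          lipDiscrepancy_le fun f hf =>
            (centeredSum_le_sum_mul_centeredSum_add hμ (hU K) hf (z K) A X).trans
              (add_le_add_left (hG f hf X) _)
    _ = ∫ X, G X ∂(Measure.pi fun _ => μ) + 2 * A.card * partitionCost μ (U K) (z K) := by
        have hmean (i : α) : ∫ X : α → E, D (X i) ∂(Measure.pi fun _ => μ) =
            partitionCost μ (U K) (z K) :=
          integral_comp_eval (μ := fun _ : α => μ) hDint.aestronglyMeasurable
        rw [integral_add hGint hrest, integral_finsetSum _ fun i _ => hterm i]
        simp only [integral_add (hDeval _) (integrable_const _), hmean, integral_const,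
          probReal_univ, one_smul, Finset.sum_const, nsmul_eq_mul]
        ring
    _ ≤ _ := by rw [add_comm]; exact add_le_add_right hGle _

lemma two_mul_add_sum_range_le {e c : ℕ → ℝ} (he : ∀ k, 0 ≤ e k) (hc : ∀ k, 0 ≤ c k)
    (hstep : ∀ k, e (k + 1) = √2 * e k) {K : ℕ} (hK : 1 ≤ √2 * e K) :
    2 * c K + ∑ i ∈ Finset.range K, e (i + 1) * (c (i + 1) + c i) ≤
      5 * ∑ k ∈ Finset.range (K + 1), e k * c k := by
  set S := ∑ k ∈ Finset.range (K + 1), e k * c k with hS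
  have hnonneg (k : ℕ) : 0 ≤ e k * c k := mul_nonneg (he k) (hc k)
  have hfine : ∑ i ∈ Finset.range K, e (i + 1) * c (i + 1) ≤ S := by
    rw [hS, Finset.sum_range_succ']
    exact le_add_of_nonneg_right (hnonneg 0)
  have hcoarse : ∑ i ∈ Finset.range K, e (i + 1) * c i = √2 * (S - e K * c K) := by
    simp only [hS, Finset.sum_range_succ, add_sub_cancel_right, Finset.mul_sum, hstep, mul_assoc]
  have hlast : c K ≤ √2 * (e K * c K) := by
    nlinarith [mul_le_mul_of_nonneg_right hK (hc K)]
  have hKS : e K * c K ≤ S :=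
    Finset.single_le_sum (fun k _ => hnonneg k) (Finset.self_mem_range_succ K)
  have hsqrt : √2 ≤ 3 / 2 := by rw [Real.sqrt_le_left (by norm_num)]; norm_num
  simp only [mul_add, Finset.sum_add_distrib, hcoarse]
  nlinarith [Real.sqrt_nonneg 2, hnonneg K]

lemma sqrt_two_pow_succ_div (n : ℝ) (k : ℕ) : √(2 ^ (k + 1) / n) = √2 * √(2 ^ k / n) := by
  rw [← Real.sqrt_mul zero_le_two, pow_succ']
  ring_nf

lemma one_le_sqrt_two_mul_sqrt_two_pow_log_div {n : ℕ} (hn : n ≠ 0) :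
    1 ≤ √2 * √((2 : ℝ) ^ Nat.log 2 n / n) := by
  rw [← sqrt_two_pow_succ_div, Real.one_le_sqrt, one_le_div (by positivity)]
  exact_mod_cast (Nat.lt_pow_succ_log_self one_lt_two n).le

lemma integral_lipDiscrepancy_div_le_sum {n : ℕ} (hn : n ≠ 0) (hμ : HasFiniteMoment 1 μ) {δ : ℝ}
    (hδ : 0 < δ) :
    (∫ X, lipDiscrepancy μ Finset.univ X ∂Measure.pi fun _ : Fin n => μ) / n ≤
      5 * ∑ k ∈ Finset.range (Nat.log 2 n + 1),
        √((2 : ℝ) ^ k / n) * ((unifQuantErr 1 (2 ^ k) μ).toReal + δ) := by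
  have hn' : (0 : ℝ) < n := by positivity
  choose z U hU hcost using fun k =>
    exists_isBalancedPartition_partitionCost_le_of_lt (pow_ne_zero k two_ne_zero) hμ
      (lt_add_of_pos_right (unifQuantErr 1 (2 ^ k) μ).toReal hδ)
  have : Subsingleton (Fin (2 ^ 0)) := inferInstanceAs (Subsingleton (Fin 1))
  have hsqrt (k : ℕ) : √((n : ℝ) * 2 ^ k) = √((2 : ℝ) ^ k / n) * n := by
    rw [← Real.sqrt_sq hn'.le, ← Real.sqrt_mul (by positivity), Real.sqrt_sq hn'.le]
    congr 1
    field_simp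
  rw [div_le_iff₀ hn']
  calc ∫ X, lipDiscrepancy μ Finset.univ X ∂(Measure.pi fun _ : Fin n => μ)
      ≤ _ := integral_lipDiscrepancy_le_chain hμ hU z Finset.univ (Nat.log 2 n)
    _ ≤ 2 * n * ((unifQuantErr 1 (2 ^ Nat.log 2 n) μ).toReal + δ) +
          ∑ i ∈ Finset.range (Nat.log 2 n), √((2 : ℝ) ^ (i + 1) / n) * n *
            (((unifQuantErr 1 (2 ^ (i + 1)) μ).toReal + δ) +
              ((unifQuantErr 1 (2 ^ i) μ).toReal + δ)) := by
        simp only [Finset.card_univ, Fintype.card_fin, Nat.cast_pow, Nat.cast_ofNat, hsqrt]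
        gcongr <;> apply hcost
    _ = (2 * ((unifQuantErr 1 (2 ^ Nat.log 2 n) μ).toReal + δ) +
          ∑ i ∈ Finset.range (Nat.log 2 n), √((2 : ℝ) ^ (i + 1) / n) *
            (((unifQuantErr 1 (2 ^ (i + 1)) μ).toReal + δ) +
              ((unifQuantErr 1 (2 ^ i) μ).toReal + δ))) * n := by
        rw [add_mul, Finset.sum_mul]
        simp only [mul_right_comm]
    _ ≤ _ := mul_le_mul_of_nonneg_right (two_mul_add_sum_range_le
        (e := fun k => √((2 : ℝ) ^ k / n)) (c := fun k => (unifQuantErr 1 (2 ^ k) μ).toReal + δ)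
        (fun _ => Real.sqrt_nonneg _) (fun _ => by positivity) (sqrt_two_pow_succ_div n)
        (one_le_sqrt_two_mul_sqrt_two_pow_log_div hn)) hn'.le

theorem expWp_one_le_sum_unifQuantErr {n : ℕ} (hn : n ≠ 0) (hμ : HasFiniteMoment 1 μ) :
    expWp 1 μ n ≤ 5 * ∑ k ∈ Finset.range (Nat.log 2 n + 1),
      ENNReal.ofReal (√((2 : ℝ) ^ k / n)) * unifQuantErr 1 (2 ^ k) μ := by
  have hreal : (∫ X, lipDiscrepancy μ Finset.univ X ∂Measure.pi fun _ : Fin n => μ) / n ≤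
      5 * ∑ k ∈ Finset.range (Nat.log 2 n + 1),
        √((2 : ℝ) ^ k / n) * (unifQuantErr 1 (2 ^ k) μ).toReal := by
    have hlim : Tendsto (fun δ => 5 * ∑ k ∈ Finset.range (Nat.log 2 n + 1),
        √((2 : ℝ) ^ k / n) * ((unifQuantErr 1 (2 ^ k) μ).toReal + δ)) (nhdsWithin 0 (Set.Ioi 0))
        (nhds (5 * ∑ k ∈ Finset.range (Nat.log 2 n + 1),
          √((2 : ℝ) ^ k / n) * ((unifQuantErr 1 (2 ^ k) μ).toReal + 0))) :=
      Continuous.tendsto (by fun_prop) 0 |>.mono_left nhdsWithin_le_nhds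
    simp only [add_zero] at hlim
    exact ge_of_tendsto hlim (eventually_mem_nhdsWithin.mono fun δ hδ =>
      integral_lipDiscrepancy_div_le_sum hn hμ hδ)
  rw [expWp_one_eq hn hμ]
  refine (ENNReal.ofReal_le_ofReal hreal).trans_eq ?_
  rw [ENNReal.ofReal_mul (by norm_num), ENNReal.ofReal_ofNat,
    ENNReal.ofReal_sum_of_nonneg fun _ _ => by positivity]
  refine congrArg _ (Finset.sum_congr rfl fun k _ => ?_)
  rw [ENNReal.ofReal_mul (Real.sqrt_nonneg _),
    ENNReal.ofReal_toReal (unifQuantErr_one_ne_top (pow_ne_zero k two_ne_zero) hμ)]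

end UpperBound

section Resampling

lemma measurePreserving_finsetPiecewise {ι : Type*} [Fintype ι] [DecidableEq ι] {α : ι → Type*}
    [∀ i, MeasurableSpace (α i)] (μ : ∀ i, Measure (α i)) [∀ i, IsProbabilityMeasure (μ i)]
    (A : Finset ι) :
    MeasurePreserving (fun z : (∀ i, α i) × (∀ i, α i) => A.piecewise z.1 z.2)
      ((Measure.pi μ).prod (Measure.pi μ)) (Measure.pi μ) := by
  have hmeas : Measurable fun z : (∀ i, α i) × (∀ i, α i) => A.piecewise z.1 z.2 := by
    refine measurable_pi_lambda _ fun i => ?_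
    by_cases hi : i ∈ A
    · simpa only [Finset.piecewise_eq_of_mem _ _ _ hi] using measurable_fst.eval
    · simpa only [Finset.piecewise_eq_of_notMem _ _ _ hi] using measurable_snd.eval
  refine ⟨hmeas, (Measure.pi_eq fun s hs => ?_).symm⟩
  have hpre : (fun z : (∀ i, α i) × (∀ i, α i) => A.piecewise z.1 z.2) ⁻¹' Set.univ.pi s =
      (Set.univ.pi (A.piecewise s fun _ => Set.univ)) ×ˢ
        (Set.univ.pi (A.piecewise (fun _ => Set.univ) s)) := by
    ext z
    simp only [Set.mem_preimage, Set.mem_univ_pi, Set.mem_prod, ← forall_and]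
    refine forall_congr' fun i => ?_
    by_cases hi : i ∈ A <;> simp [hi]
  rw [Measure.map_apply hmeas (MeasurableSet.univ_pi hs), hpre, Measure.prod_prod, Measure.pi_pi,
    Measure.pi_pi, ← Finset.prod_mul_distrib]
  refine Finset.prod_congr rfl fun i _ => ?_
  by_cases hi : i ∈ A <;> simp [hi]

variable {E ι : Type*} [MetricSpace E] [MeasurableSpace E] [OpensMeasurableSpace E]
  {μ : Measure E} [IsProbabilityMeasure μ]

-- Jensen: averaging over independent copies of the points outside `A` removes their contribution.
lemma integral_lipDiscrepancy_le_univ [SecondCountableTopology E] [Fintype ι]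
    (hμ : HasFiniteMoment 1 μ) (A : Finset ι) :
    ∫ X, lipDiscrepancy μ A X ∂(Measure.pi fun _ => μ) ≤
      ∫ X, lipDiscrepancy μ Finset.univ X ∂(Measure.pi fun _ : ι => μ) := by
  classical
  set P : Measure (ι → E) := Measure.pi fun _ => μ
  have hglue : MeasurePreserving _ (P.prod P) P := measurePreserving_finsetPiecewise _ A
  have huniv : Integrable (lipDiscrepancy μ Finset.univ) P := integrable_lipDiscrepancy hμ _
  have hint := hglue.integrable_comp_of_integrable huniv
  have hcopies : ∫ X, ∫ Y, lipDiscrepancy μ Finset.univ (A.piecewise X Y) ∂P ∂P =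
      ∫ X, lipDiscrepancy μ Finset.univ X ∂P := by
    conv_rhs => rw [← hglue.map_eq]
    rw [integral_map hglue.aemeasurable (hglue.map_eq.symm ▸ huniv.aestronglyMeasurable)]
    exact (integral_prod _ hint).symm
  rw [← hcopies]
  refine integral_mono_ae (integrable_lipDiscrepancy hμ A) hint.integral_prod_left ?_
  filter_upwards [hint.prod_right_ae] with X hX
  refine lipDiscrepancy_le fun f hf => ?_
  have hfint := integrable_of_lipschitzWith hμ hf
  calc centeredSum μ A f X
      = ∫ Y, (centeredSum μ A f X + centeredSum μ Aᶜ f Y) ∂P := by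
        rw [integral_add (integrable_const _) (integrable_centeredSum hfint _),
          integral_centeredSum hfint, integral_const, probReal_univ, one_smul, add_zero]
    _ ≤ ∫ Y, lipDiscrepancy μ Finset.univ (A.piecewise X Y) ∂P := by
        refine integral_mono ((integrable_const _).add (integrable_centeredSum hfint _)) hX
          fun Y => ?_
        exact (centeredSum_piecewise_univ A f X Y).ge.trans
          (centeredSum_le_lipDiscrepancy hμ _ _ hf)

end Resampling

section Symmetrization

variable {E ι κ : Type*} [MetricSpace E] [MeasurableSpace E] [Fintype κ]
  {μ : Measure E} {B : κ → Finset ι}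

lemma sum_lipDiscrepancy_le {X : ι → E} {w : ℝ}
    (h : ∀ f : κ → E → ℝ, (∀ l, LipschitzWith 1 (f l)) → ∑ l, centeredSum μ (B l) (f l) X ≤ w) :
    ∑ l, lipDiscrepancy μ (B l) X ≤ w := by
  refine le_of_forall_pos_le_add fun ε hε => ?_
  set δ := ε / (Fintype.card κ + 1)
  have hδ : 0 < δ := by positivity
  have hcard : Fintype.card κ * δ ≤ ε := by
    rw [← mul_div_assoc, div_le_iff₀ (by positivity)]
    linarith
  have : Nonempty {f : E → ℝ // LipschitzWith 1 f} := ⟨⟨0, LipschitzWith.const' 0⟩⟩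
  choose f hf using fun l => exists_lt_of_lt_ciSup (sub_lt_self (lipDiscrepancy μ (B l) X) hδ)
  calc ∑ l, lipDiscrepancy μ (B l) X ≤ ∑ l, (centeredSum μ (B l) (f l).1 X + δ) :=
        Finset.sum_le_sum fun l _ => (sub_lt_iff_lt_add.1 (hf l)).le
    _ = ∑ l, centeredSum μ (B l) (f l).1 X + Fintype.card κ * δ := by
        rw [Finset.sum_add_distrib, Finset.sum_const, Finset.card_univ, nsmul_eq_mul]
    _ ≤ w + ε := add_le_add (h _ fun l => (f l).2) hcard

variable [Fintype ι] [OpensMeasurableSpace E] [SecondCountableTopology E] [IsProbabilityMeasure μ]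

lemma sum_integral_lipDiscrepancy_le_of_symmetrized (hμ : HasFiniteMoment 1 μ) {Ψ : (ι → E) → ℝ}
    (hΨ : Integrable Ψ (Measure.pi fun _ => μ))
    (h : ∀ (X X' : ι → E) (f : κ → E → ℝ), (∀ l, LipschitzWith 1 (f l)) →
      ∑ l, (centeredSum μ (B l) (f l) X - centeredSum μ (B l) (f l) X') ≤ Ψ X + Ψ X') :
    ∑ l, ∫ X, lipDiscrepancy μ (B l) X ∂(Measure.pi fun _ => μ) ≤
      2 * ∫ X, Ψ X ∂(Measure.pi fun _ => μ) := by
  set P : Measure (ι → E) := Measure.pi fun _ => μ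
  have hpointwise (X : ι → E) : ∑ l, lipDiscrepancy μ (B l) X ≤ Ψ X + ∫ X', Ψ X' ∂P := by
    refine sum_lipDiscrepancy_le fun f hf => ?_
    have hint (l : κ) := integrable_centeredSum (integrable_of_lipschitzWith hμ (hf l)) (B l)
    have hdiff (l : κ) : Integrable
        (fun X' => centeredSum μ (B l) (f l) X - centeredSum μ (B l) (f l) X') P :=
      (integrable_const _).sub (hint l)
    calc ∑ l, centeredSum μ (B l) (f l) X
        = ∫ X', ∑ l, (centeredSum μ (B l) (f l) X - centeredSum μ (B l) (f l) X') ∂P := by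
          rw [integral_finsetSum _ fun l _ => hdiff l]
          refine Finset.sum_congr rfl fun l _ => ?_
          rw [integral_sub (integrable_const _) (hint l),
            integral_centeredSum (integrable_of_lipschitzWith hμ (hf l)), integral_const,
            probReal_univ, one_smul, sub_zero]
      _ ≤ ∫ X', (Ψ X + Ψ X') ∂P :=
          integral_mono (integrable_finsetSum _ fun l _ => hdiff l)
            ((integrable_const _).add hΨ) fun X' => h X X' f hf
      _ = Ψ X + ∫ X', Ψ X' ∂P := by
          rw [integral_add (integrable_const _) hΨ, integral_const, probReal_univ, one_smul]
  have hint (l : κ) := integrable_lipDiscrepancy hμ (B l)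
  calc ∑ l, ∫ X, lipDiscrepancy μ (B l) X ∂P = ∫ X, ∑ l, lipDiscrepancy μ (B l) X ∂P :=
        (integral_finsetSum _ fun l _ => hint l).symm
    _ ≤ ∫ X, (Ψ X + ∫ X', Ψ X' ∂P) ∂P :=
        integral_mono (integrable_finsetSum _ fun l _ => hint l)
          (hΨ.add (integrable_const _)) hpointwise
    _ = 2 * ∫ X, Ψ X ∂P := by
        rw [integral_add hΨ (integrable_const _), integral_const, probReal_univ, one_smul, two_mul]

end Symmetrization

section RandomSigns

variable {κ : Type*} [Fintype κ] [DecidableEq κ]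

lemma sum_signs_smul_smul (k l : κ) (a : ℝ) :
    ∑ s : κ → ℤˣ, s k • s l • a = if k = l then 2 ^ Fintype.card κ * a else 0 := by
  split_ifs with hkl
  · subst hkl
    simp [smul_smul, Int.units_mul_self, Fintype.card_units_int]
  · refine Finset.sum_involution (fun s _ => Function.update s k (-s k)) ?_ ?_ ?_ ?_
    · intro s _
      rw [Function.update_self, Function.update_of_ne (Ne.symm hkl), Units.neg_smul,
        add_neg_cancel]
    · intro s _ _ heq
      exact neg_units_ne_self (s k) (by simpa using congrFun heq k)
    · simp
    · simp

lemma sum_signs_sum_smul_smul (D : κ → κ → ℝ) :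
    ∑ s : κ → ℤˣ, ∑ k, ∑ l, s k • s l • D k l = 2 ^ Fintype.card κ * ∑ l, D l l := by
  rw [Finset.sum_comm, Finset.mul_sum]
  refine Finset.sum_congr rfl fun k _ => ?_
  rw [Finset.sum_comm]
  simp [sum_signs_smul_smul]

lemma sum_diag_le_of_signs (D : κ → κ → ℝ) {H : (κ → ℤˣ) → ℝ} {V : ℝ} {bad : Finset (κ → ℤˣ)}
    (hH : ∀ s, 0 ≤ H s) (hgood : ∀ s ∉ bad, ∑ k, ∑ l, s k • s l • D k l ≤ H s)
    (hbad : ∀ s ∈ bad, ∑ k, ∑ l, s k • s l • D k l ≤ V) :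
    2 ^ Fintype.card κ * ∑ l, D l l ≤ ∑ s, H s + bad.card * V := by
  rw [← sum_signs_sum_smul_smul, ← Finset.sum_compl_add_sum bad, ← nsmul_eq_mul,
    ← Finset.sum_const]
  refine add_le_add ?_ (Finset.sum_le_sum hbad)
  exact (Finset.sum_le_sum fun s hs => hgood s (Finset.mem_compl.1 hs)).trans
    (Finset.sum_le_univ_sum_of_nonneg hH)

lemma sum_signs_exp_le (a : κ → ℝ) :
    ∑ s : κ → ℤˣ, Real.exp (∑ l, s l • a l) ≤
      2 ^ Fintype.card κ * Real.exp ((∑ l, a l ^ 2) / 2) := by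
  have hcosh (l : κ) : ∑ ε : ℤˣ, Real.exp (ε • a l) = 2 * Real.cosh (a l) := by
    rw [UnitsInt.univ, Finset.sum_pair (by decide), Real.cosh_eq, Units.neg_smul]
    simp only [one_smul]
    ring
  calc ∑ s : κ → ℤˣ, Real.exp (∑ l, s l • a l) = ∏ l, ∑ ε : ℤˣ, Real.exp (ε • a l) := by
        rw [Finset.prod_univ_sum, Fintype.piFinset_univ]
        simp only [Real.exp_sum]
    _ ≤ ∏ l, 2 * Real.exp (a l ^ 2 / 2) := by
        simp only [hcosh]
        gcongr with l
        exact Real.cosh_le_exp_half_sq _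
    _ = 2 ^ Fintype.card κ * Real.exp ((∑ l, a l ^ 2) / 2) := by
        rw [Finset.prod_mul_distrib, Finset.prod_const, Finset.card_univ, ← Real.exp_sum,
          Finset.sum_div]

-- Hoeffding's inequality: Markov's inequality for `exp (η * ∑ l, s l • a l)` with `η = L / σ`.
lemma card_signs_lt_sum_le (a : κ → ℝ) {L σ : ℝ} (hL : 0 ≤ L) (hσ : 0 ≤ σ)
    (ha : ∑ l, a l ^ 2 ≤ σ ^ 2) :
    ((Finset.univ.filter fun s : κ → ℤˣ => L * σ < ∑ l, s l • a l).card : ℝ) ≤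
      2 ^ Fintype.card κ * Real.exp (-(L ^ 2 / 2)) := by
  obtain rfl | hσ := hσ.eq_or_lt
  · have hzero (l : κ) : a l = 0 := by
      have := Finset.single_le_sum (fun l _ => sq_nonneg (a l)) (Finset.mem_univ l)
      exact pow_eq_zero_iff two_ne_zero |>.1 (le_antisymm (by linarith) (sq_nonneg _))
    simp only [hzero, smul_zero, Finset.sum_const_zero, mul_zero, lt_irrefl, Finset.filter_false,
      Finset.card_empty, Nat.cast_zero]
    positivity
  set η := L / σ
  have hησ : η * σ = L := div_mul_cancel₀ L hσ.ne'
  have hsmul (s : κ → ℤˣ) : ∑ l, s l • (η * a l) = η * ∑ l, s l • a l := by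
    rw [Finset.mul_sum]
    exact Finset.sum_congr rfl fun l _ => (mul_smul_comm _ _ _).symm
  have hsq : ∑ l, (η * a l) ^ 2 ≤ L ^ 2 := by
    simp only [mul_pow, ← Finset.mul_sum]
    calc η ^ 2 * ∑ l, a l ^ 2 ≤ η ^ 2 * σ ^ 2 := by gcongr
      _ = L ^ 2 := by rw [← mul_pow, hησ]
  have hmarkov : (Finset.univ.filter fun s : κ → ℤˣ => L * σ < ∑ l, s l • a l).card *
      Real.exp (L ^ 2) ≤ 2 ^ Fintype.card κ * Real.exp (L ^ 2 / 2) := by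
    rw [← nsmul_eq_mul, ← Finset.sum_const]
    calc _ ≤ ∑ s : κ → ℤˣ, Real.exp (∑ l, s l • (η * a l)) := by
          refine (Finset.sum_le_sum fun s hs => Real.exp_le_exp.2 ?_).trans
            (Finset.sum_le_univ_sum_of_nonneg fun s => (Real.exp_pos _).le)
          calc L ^ 2 = η * (L * σ) := by rw [mul_left_comm, hησ, sq]
            _ ≤ η * ∑ l, s l • a l := by
              gcongr
              exact (Finset.mem_filter.1 hs).2.le
            _ = ∑ l, s l • (η * a l) := (hsmul s).symm
      _ ≤ 2 ^ Fintype.card κ * Real.exp (L ^ 2 / 2) := by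
          refine (sum_signs_exp_le _).trans ?_
          gcongr
  rw [← le_div_iff₀ (Real.exp_pos _), mul_div_assoc, ← Real.exp_sub] at hmarkov
  exact hmarkov.trans_eq (by ring_nf)

end RandomSigns

section SignedSums

lemma units_smul_le_abs (ε : ℤˣ) (x : ℝ) : ε • x ≤ |x| := by
  obtain rfl | rfl := Int.units_eq_one_or ε
  · simpa using le_abs_self x
  · simpa [Units.neg_smul] using neg_le_abs x

variable {κ : Type*} [Fintype κ]

open Classical in
-- Hoeffding's inequality for the increments of the signed sum, and a union bound over the pairs.
lemma card_signs_not_lipschitzOnWith_le {E α : Type*} [PseudoMetricSpace E] [Fintype α]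
    [DecidableEq κ] (x : α → E) {f : κ → E → ℝ} (hf : ∀ l, LipschitzWith 1 (f l)) (L : ℝ≥0) :
    ((Finset.univ.filter fun s : κ → ℤˣ => ¬ LipschitzOnWith (L * NNReal.sqrt (Fintype.card κ))
        (fun y => ∑ l, s l • f l y) (Set.range x)).card : ℝ) ≤
      Fintype.card α * (Fintype.card α - 1) *
        (2 ^ Fintype.card κ * Real.exp (-((L : ℝ) ^ 2 / 2))) := by
  set bad : α × α → Finset (κ → ℤˣ) := fun p => Finset.univ.filter fun s =>
    L * (√(Fintype.card κ) * dist (x p.1) (x p.2)) < ∑ l, s l • (f l (x p.1) - f l (x p.2))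
  have hsub : (Finset.univ.filter fun s : κ → ℤˣ => ¬ LipschitzOnWith
      (L * NNReal.sqrt (Fintype.card κ)) (fun y => ∑ l, s l • f l y) (Set.range x)) ⊆
      Finset.univ.offDiag.biUnion bad := by
    intro s hs
    by_contra hgood
    refine (Finset.mem_filter.1 hs).2 (LipschitzOnWith.of_le_add_mul _ ?_)
    rintro _ ⟨a, rfl⟩ _ ⟨b, rfl⟩
    obtain rfl | hab := eq_or_ne a b
    · simp
    have : ¬ L * (√(Fintype.card κ) * dist (x a) (x b)) < ∑ l, s l • (f l (x a) - f l (x b)) :=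
      fun hlt => hgood (Finset.mem_biUnion.2 ⟨(a, b), by simp [hab], by simp [bad, hlt]⟩)
    simp only [smul_sub, Finset.sum_sub_distrib, not_lt] at this
    push_cast
    rw [mul_assoc]
    linarith
  have hbad (p : α × α) :
      ((bad p).card : ℝ) ≤ 2 ^ Fintype.card κ * Real.exp (-((L : ℝ) ^ 2 / 2)) := by
    refine card_signs_lt_sum_le _ L.2 (by positivity) ?_
    calc ∑ l, (f l (x p.1) - f l (x p.2)) ^ 2 ≤ ∑ _l : κ, dist (x p.1) (x p.2) ^ 2 := by
          refine Finset.sum_le_sum fun l _ => sq_le_sq.2 ?_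
          simpa [Real.dist_eq] using (hf l).dist_le_mul (x p.1) (x p.2)
      _ = (√(Fintype.card κ) * dist (x p.1) (x p.2)) ^ 2 := by
          rw [mul_pow, Real.sq_sqrt (Nat.cast_nonneg _)]
          simp
  calc _ ≤ ∑ p ∈ Finset.univ.offDiag, ((bad p).card : ℝ) := by
        exact_mod_cast (Finset.card_le_card hsub).trans Finset.card_biUnion_le
    _ ≤ ∑ _p ∈ (Finset.univ : Finset α).offDiag, _ := Finset.sum_le_sum fun p _ => hbad p
    _ = _ := by
        rw [Finset.sum_const, Finset.offDiag_card, nsmul_eq_mul, Finset.card_univ,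
          Nat.cast_sub (Nat.le_mul_self _)]
        push_cast
        ring

variable {ι : Type*}

lemma sum_smul_sum_signedSum_sub {E : Type*} (B : κ → Finset ι) (f : κ → E → ℝ) (s : κ → ℤˣ)
    (X X' : ι → E) :
    ∑ k, s k • ∑ i ∈ B k, (∑ l, s l • f l (X i) - ∑ l, s l • f l (X' i)) =
      ∑ k, ∑ l, s k • s l • ∑ i ∈ B k, (f l (X i) - f l (X' i)) := by
  refine Finset.sum_congr rfl fun k _ => ?_
  simp only [← Finset.sum_sub_distrib, ← smul_sub, ← Finset.smul_sum]
  rw [Finset.sum_comm]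
  simp only [Finset.smul_sum]

variable [DecidableEq ι]

/-- The union of the blocks `B k` to which the sign assignment `s` gives the sign `ε`. -/
def blocksOfSign (B : κ → Finset ι) (s : κ → ℤˣ) (ε : ℤˣ) : Finset ι :=
  (Finset.univ.filter fun k => s k = ε).biUnion B

lemma sum_smul_sum_blocksOfSign {B : κ → Finset ι} (hB : Pairwise (Function.onFun Disjoint B))
    (s : κ → ℤˣ) (g : ι → ℝ) :
    ∑ ε : ℤˣ, ε • ∑ i ∈ blocksOfSign B s ε, g i = ∑ k, s k • ∑ i ∈ B k, g i := by
  rw [← Finset.sum_fiberwise Finset.univ s]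
  refine Finset.sum_congr rfl fun ε _ => ?_
  rw [blocksOfSign, Finset.sum_biUnion (hB.set_pairwise _), Finset.smul_sum]
  exact Finset.sum_congr rfl fun k hk => by rw [(Finset.mem_filter.1 hk).2]

end SignedSums

section SignedDiscrepancy

variable {E ι κ : Type*} [MetricSpace E] [MeasurableSpace E] [Fintype κ] {μ : Measure E}

/-- The total discrepancy of a sample split into the points in positive and those in negative
blocks. It controls the fluctuation of a Lipschitz function along the signed sample. -/
noncomputable def signedDiscrepancy [DecidableEq ι] (μ : Measure E) (B : κ → Finset ι)
    (s : κ → ℤˣ) (X : ι → E) : ℝ :=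
  ∑ ε : ℤˣ, lipDiscrepancy μ (blocksOfSign B s ε) X

variable [OpensMeasurableSpace E] [IsProbabilityMeasure μ]

lemma abs_sum_sub_le_mul_lipDiscrepancy (hμ : HasFiniteMoment 1 μ) (A : Finset ι) (X X' : ι → E)
    {K : ℝ≥0} {f : E → ℝ} (hf : LipschitzWith K f) :
    |∑ i ∈ A, (f (X i) - f (X' i))| ≤ K * (lipDiscrepancy μ A X + lipDiscrepancy μ A X') := by
  have hneg (Y : ι → E) : centeredSum μ A (fun y => -f y) Y = -centeredSum μ A f Y := by
    simp only [centeredSum, integral_neg, ← Finset.sum_neg_distrib, neg_sub_neg, neg_sub]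
  have hle (Y : ι → E) := centeredSum_le_mul_lipDiscrepancy hμ A Y hf
  have hge (Y : ι → E) : -centeredSum μ A f Y ≤ K * lipDiscrepancy μ A Y :=
    hneg Y ▸ centeredSum_le_mul_lipDiscrepancy hμ A Y hf.neg
  rw [← centeredSum_sub_centeredSum (μ := μ), abs_le]
  constructor <;> linarith [hle X, hle X', hge X, hge X']

variable {B : κ → Finset ι}

lemma sum_smul_smul_sum_sub_le (hμ : HasFiniteMoment 1 μ) {f : κ → E → ℝ}
    (hf : ∀ l, LipschitzWith 1 (f l)) (s : κ → ℤˣ) (X X' : ι → E) :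
    ∑ k, ∑ l, s k • s l • ∑ i ∈ B k, (f l (X i) - f l (X' i)) ≤
      Fintype.card κ * ∑ k, (lipDiscrepancy μ (B k) X + lipDiscrepancy μ (B k) X') := by
  rw [Finset.mul_sum]
  refine Finset.sum_le_sum fun k _ => ?_
  rw [← nsmul_eq_mul, ← Finset.card_univ, ← Finset.sum_const]
  refine Finset.sum_le_sum fun l _ => ?_
  rw [smul_smul]
  simpa using (units_smul_le_abs _ _).trans (abs_sum_sub_le_mul_lipDiscrepancy hμ (B k) X X' (hf l))

variable [DecidableEq ι]

lemma signedDiscrepancy_nonneg (hμ : HasFiniteMoment 1 μ) (B : κ → Finset ι) (s : κ → ℤˣ)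
    (X : ι → E) : 0 ≤ signedDiscrepancy μ B s X :=
  Finset.sum_nonneg fun _ _ => lipDiscrepancy_nonneg hμ _ X

lemma sum_smul_sum_sub_le_mul_signedDiscrepancy (hμ : HasFiniteMoment 1 μ)
    (hB : Pairwise (Function.onFun Disjoint B)) (s : κ → ℤˣ) (X X' : ι → E) {K : ℝ≥0} {F : E → ℝ}
    (hF : LipschitzOnWith K F (Set.range (Sum.elim X X'))) :
    ∑ k, s k • ∑ i ∈ B k, (F (X i) - F (X' i)) ≤
      K * (signedDiscrepancy μ B s X + signedDiscrepancy μ B s X') := by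
  obtain ⟨G, hG, hFG⟩ := hF.extend_real
  have hX (i : ι) : F (X i) = G (X i) := hFG ⟨Sum.inl i, rfl⟩
  have hX' (i : ι) : F (X' i) = G (X' i) := hFG ⟨Sum.inr i, rfl⟩
  simp only [hX, hX', signedDiscrepancy]
  rw [← sum_smul_sum_blocksOfSign hB, ← Finset.sum_add_distrib, Finset.mul_sum]
  exact Finset.sum_le_sum fun ε _ =>
    (units_smul_le_abs ε _).trans (abs_sum_sub_le_mul_lipDiscrepancy hμ _ X X' hG)

variable [Fintype ι] [DecidableEq κ]

/-- The majorant, as a function of one sample `X`, produced by the random signs argument for the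
blocks `B` at the Lipschitz level `L * √(card κ)`. The first term averages over all signs, and the
second one bounds the contribution of the signs for which the signed sum is not Lipschitz of this
level along the `2 * card ι` points of two samples. -/
noncomputable def signMajorant (μ : Measure E) (B : κ → Finset ι) (L : ℝ≥0) (X : ι → E) : ℝ :=
  L * √(Fintype.card κ) * ((2 ^ Fintype.card κ)⁻¹ * ∑ s : κ → ℤˣ, signedDiscrepancy μ B s X) +
    2 * Fintype.card ι * (2 * Fintype.card ι - 1) * Real.exp (-((L : ℝ) ^ 2 / 2)) *
      (Fintype.card κ * ∑ k, lipDiscrepancy μ (B k) X)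

lemma sum_centeredSum_sub_le_signMajorant (hμ : HasFiniteMoment 1 μ)
    (hB : Pairwise (Function.onFun Disjoint B)) (L : ℝ≥0) (X X' : ι → E) {f : κ → E → ℝ}
    (hf : ∀ l, LipschitzWith 1 (f l)) :
    ∑ l, (centeredSum μ (B l) (f l) X - centeredSum μ (B l) (f l) X') ≤
      signMajorant μ B L X + signMajorant μ B L X' := by
  classical
  simp only [centeredSum_sub_centeredSum]
  set K : ℝ≥0 := L * NNReal.sqrt (Fintype.card κ) with hK
  set V : ℝ := Fintype.card κ * ∑ k, (lipDiscrepancy μ (B k) X + lipDiscrepancy μ (B k) X') with hV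
  set bad : Finset (κ → ℤˣ) := Finset.univ.filter fun s =>
    ¬ LipschitzOnWith K (fun y => ∑ l, s l • f l y) (Set.range (Sum.elim X X'))
  have hgood (s : κ → ℤˣ) (hs : s ∉ bad) :
      ∑ k, ∑ l, s k • s l • ∑ i ∈ B k, (f l (X i) - f l (X' i)) ≤
        K * (signedDiscrepancy μ B s X + signedDiscrepancy μ B s X') := by
    have hlip : LipschitzOnWith K (fun y => ∑ l, s l • f l y) (Set.range (Sum.elim X X')) := by
      simpa [bad] using hs
    have hle := sum_smul_sum_sub_le_mul_signedDiscrepancy hμ hB s X X' hlip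
    rwa [sum_smul_sum_signedSum_sub] at hle
  have hV0 : 0 ≤ V := mul_nonneg (Nat.cast_nonneg _) (Finset.sum_nonneg fun k _ =>
    add_nonneg (lipDiscrepancy_nonneg hμ (B k) X) (lipDiscrepancy_nonneg hμ (B k) X'))
  have hcard := mul_le_mul_of_nonneg_right
    (card_signs_not_lipschitzOnWith_le (Sum.elim X X') hf L) hV0
  have htotal := (sum_diag_le_of_signs _ (fun s => mul_nonneg K.coe_nonneg (add_nonneg
    (signedDiscrepancy_nonneg hμ B s X) (signedDiscrepancy_nonneg hμ B s X'))) hgood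
    fun s _ => sum_smul_smul_sum_sub_le hμ hf s X X').trans (add_le_add_right hcard _)
  rw [← le_div_iff₀' (by positivity)] at htotal
  refine htotal.trans_eq ?_
  simp only [signMajorant, hV, hK, ← Finset.mul_sum, Finset.sum_add_distrib, Fintype.card_sum]
  push_cast
  field_simp
  ring

end SignedDiscrepancy

section LowerBound

lemma exists_pairwise_disjoint_card_eq {κ ι : Type*} [Fintype κ] [Fintype ι] {m : ℕ}
    (h : Fintype.card κ * m ≤ Fintype.card ι) :
    ∃ B : κ → Finset ι, Pairwise (Function.onFun Disjoint B) ∧ ∀ k, (B k).card = m := by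
  obtain ⟨e⟩ : Nonempty (κ × Fin m ↪ ι) := Function.Embedding.nonempty_of_card_le (by simpa using h)
  refine ⟨fun k => Finset.univ.map ((Function.Embedding.sectR k (Fin m)).trans e),
    fun k l hkl => Finset.disjoint_left.2 fun i hk hl => ?_, fun k => by simp⟩
  simp only [Finset.mem_map, Finset.mem_univ, true_and] at hk hl
  obtain ⟨⟨a, rfl⟩, b, hb⟩ := hk, hl
  exact hkl (congrArg Prod.fst (e.injective hb)).symm

variable {E ι κ : Type*} [MetricSpace E] [MeasurableSpace E] [OpensMeasurableSpace E]
  [SecondCountableTopology E] [Fintype ι] [Fintype κ] {μ : Measure E} [IsProbabilityMeasure μ]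

section Integrals

lemma integrable_sum_lipDiscrepancy (hμ : HasFiniteMoment 1 μ) (B : κ → Finset ι) :
    Integrable (fun X => ∑ k, lipDiscrepancy μ (B k) X) (Measure.pi fun _ => μ) :=
  integrable_finsetSum _ fun k _ => integrable_lipDiscrepancy hμ (B k)

variable [DecidableEq ι]

lemma integrable_signedDiscrepancy (hμ : HasFiniteMoment 1 μ) (B : κ → Finset ι) (s : κ → ℤˣ) :
    Integrable (signedDiscrepancy μ B s) (Measure.pi fun _ => μ) :=
  integrable_finsetSum _ fun _ _ => integrable_lipDiscrepancy hμ _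

lemma integral_signedDiscrepancy_le (hμ : HasFiniteMoment 1 μ) (B : κ → Finset ι) (s : κ → ℤˣ) :
    ∫ X, signedDiscrepancy μ B s X ∂(Measure.pi fun _ => μ) ≤
      2 * ∫ X, lipDiscrepancy μ Finset.univ X ∂(Measure.pi fun _ : ι => μ) := by
  simp only [signedDiscrepancy]
  rw [integral_finsetSum _ fun ε _ => integrable_lipDiscrepancy hμ _]
  refine (Finset.sum_le_card_nsmul _ _ _ fun ε _ =>
    integral_lipDiscrepancy_le_univ hμ (blocksOfSign B s ε)).trans_eq ?_
  rw [Finset.card_univ, Fintype.card_units_int, two_nsmul, two_mul]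

variable [DecidableEq κ]

lemma integrable_sum_signedDiscrepancy (hμ : HasFiniteMoment 1 μ) (B : κ → Finset ι) :
    Integrable (fun X => ∑ s, signedDiscrepancy μ B s X) (Measure.pi fun _ => μ) :=
  integrable_finsetSum _ fun s _ => integrable_signedDiscrepancy hμ B s

lemma integrable_signMajorant (hμ : HasFiniteMoment 1 μ) (B : κ → Finset ι) (L : ℝ≥0) :
    Integrable (signMajorant μ B L) (Measure.pi fun _ => μ) :=
  (((integrable_sum_signedDiscrepancy hμ B).const_mul _).const_mul _).add
    (((integrable_sum_lipDiscrepancy hμ B).const_mul _).const_mul _)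

lemma integral_signMajorant_le (hμ : HasFiniteMoment 1 μ) (B : κ → Finset ι) (L : ℝ≥0) :
    ∫ X, signMajorant μ B L X ∂(Measure.pi fun _ => μ) ≤
      L * √(Fintype.card κ) *
          (2 * ∫ X, lipDiscrepancy μ Finset.univ X ∂(Measure.pi fun _ : ι => μ)) +
        2 * Fintype.card ι * (2 * Fintype.card ι - 1) * Real.exp (-((L : ℝ) ^ 2 / 2)) *
          (Fintype.card κ * ∑ k, ∫ X, lipDiscrepancy μ (B k) X ∂(Measure.pi fun _ => μ)) := by
  have haverage : (2 ^ Fintype.card κ)⁻¹ *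
      ∫ X, ∑ s : κ → ℤˣ, signedDiscrepancy μ B s X ∂(Measure.pi fun _ => μ) ≤
        2 * ∫ X, lipDiscrepancy μ Finset.univ X ∂(Measure.pi fun _ : ι => μ) := by
    rw [integral_finsetSum _ fun s _ => integrable_signedDiscrepancy hμ B s,
      inv_mul_le_iff₀ (by positivity)]
    refine (Finset.sum_le_card_nsmul _ _ _ fun s _ =>
      integral_signedDiscrepancy_le hμ B s).trans_eq ?_
    simp [Fintype.card_units_int]
  simp only [signMajorant]
  rw [integral_add (((integrable_sum_signedDiscrepancy hμ B).const_mul _).const_mul _)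
      (((integrable_sum_lipDiscrepancy hμ B).const_mul _).const_mul _), integral_const_mul,
    integral_const_mul, integral_const_mul, integral_const_mul,
    ← integral_finsetSum _ fun k _ => integrable_lipDiscrepancy hμ (B k)]
  gcongr

end Integrals

variable {B : κ → Finset ι}

lemma sum_integral_lipDiscrepancy_le_add (hμ : HasFiniteMoment 1 μ)
    (hB : Pairwise (Function.onFun Disjoint B)) (L : ℝ≥0) :
    ∑ k, ∫ X, lipDiscrepancy μ (B k) X ∂(Measure.pi fun _ => μ) ≤
      4 * L * √(Fintype.card κ) *
          ∫ X, lipDiscrepancy μ Finset.univ X ∂(Measure.pi fun _ : ι => μ) +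
        2 * (2 * Fintype.card ι * (2 * Fintype.card ι - 1) * Real.exp (-((L : ℝ) ^ 2 / 2)) *
          Fintype.card κ) * ∑ k, ∫ X, lipDiscrepancy μ (B k) X ∂(Measure.pi fun _ => μ) := by
  classical
  linarith [sum_integral_lipDiscrepancy_le_of_symmetrized hμ (integrable_signMajorant hμ B L)
    fun X X' f hf => sum_centeredSum_sub_le_signMajorant hμ hB L X X' hf,
    integral_signMajorant_le hμ B L]

lemma two_mul_mul_exp_neg_log_mul_le {n r : ℕ} (hn : n ≠ 0) (hr : r ≤ n) :
    2 * n * (2 * n - 1) * Real.exp (-(√(8 * Real.log (2 * n)) ^ 2 / 2)) * r ≤ 1 / 8 := by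
  have hn1 : (1 : ℝ) ≤ n := by exact_mod_cast Nat.one_le_iff_ne_zero.2 hn
  have hexp : Real.exp (-(√(8 * Real.log (2 * n)) ^ 2 / 2)) = ((2 * n : ℝ) ^ 4)⁻¹ := by
    rw [Real.sq_sqrt (mul_nonneg (by norm_num) (Real.log_nonneg (by linarith))), Real.exp_neg,
      show 8 * Real.log (2 * n) / 2 = (4 : ℕ) * Real.log (2 * n) by push_cast; ring,
      Real.exp_nat_mul, Real.exp_log (by linarith)]
  calc 2 * n * (2 * n - 1) * Real.exp (-(√(8 * Real.log (2 * n)) ^ 2 / 2)) * r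
      ≤ 2 * n * (2 * n - 1) * ((2 * n : ℝ) ^ 4)⁻¹ * n := by
        rw [hexp]
        have : (0 : ℝ) ≤ 2 * n - 1 := by linarith
        gcongr
    _ = (2 * n - 1) / (8 * n ^ 2) := by field_simp; ring
    _ ≤ 1 / 8 := by
        rw [div_le_div_iff₀ (by positivity) (by norm_num)]
        nlinarith [sq_nonneg ((n : ℝ) - 1)]

-- The level `L² = 8 log (2 n)` makes the exceptional signs contribute at most a quarter of the
-- left-hand side, which is absorbed.
lemma sum_integral_lipDiscrepancy_le_mul_sqrt_log [Nonempty ι] (hμ : HasFiniteMoment 1 μ)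
    (hB : Pairwise (Function.onFun Disjoint B)) (hcard : Fintype.card κ ≤ Fintype.card ι) :
    3 / 4 * ∑ k, ∫ X, lipDiscrepancy μ (B k) X ∂(Measure.pi fun _ => μ) ≤
      4 * √(8 * Real.log (2 * Fintype.card ι)) * √(Fintype.card κ) *
        ∫ X, lipDiscrepancy μ Finset.univ X ∂(Measure.pi fun _ : ι => μ) := by
  have hT : 0 ≤ ∑ k, ∫ X, lipDiscrepancy μ (B k) X ∂(Measure.pi fun _ => μ) :=
    Finset.sum_nonneg fun k _ => integral_nonneg fun X => lipDiscrepancy_nonneg hμ (B k) X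
  have hle := sum_integral_lipDiscrepancy_le_add hμ hB
    (√(8 * Real.log (2 * Fintype.card ι))).toNNReal
  rw [Real.coe_toNNReal _ (Real.sqrt_nonneg _)] at hle
  have htail := mul_le_mul_of_nonneg_right
    (two_mul_mul_exp_neg_log_mul_le Fintype.card_ne_zero hcard) hT
  linarith

lemma card_mul_unifQuantErr_one_le_integral {A : Finset ι} (hA : A.Nonempty)
    (hμ : HasFiniteMoment 1 μ) :
    A.card * (unifQuantErr 1 A.card μ).toReal ≤
      ∫ X, lipDiscrepancy μ A X ∂(Measure.pi fun _ => μ) := by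
  simpa using integral_mono (integrable_const _) (integrable_lipDiscrepancy hμ A)
    (card_mul_unifQuantErr_one_le hA hμ)

lemma sqrt_div_mul_le_sqrt_two_mul {m n : ℕ} (hm : 0 < m) (hmn : m ≤ n) :
    √((m : ℝ) / n) * n ≤ √2 * √(n / m : ℕ) * m := by
  have hn : (0 : ℝ) < n := by exact_mod_cast hm.trans_le hmn
  have hdiv : (n : ℝ) ≤ 2 * (n / m : ℕ) * m := by
    have hlt : n < m * (n / m + 1) := Nat.lt_mul_div_succ n hm
    have hone : 1 ≤ n / m := (Nat.one_le_div_iff hm).2 hmn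
    exact_mod_cast (by nlinarith : n ≤ 2 * (n / m) * m)
  refine (sq_le_sq₀ (by positivity) (by positivity)).1 ?_
  calc (√((m : ℝ) / n) * n) ^ 2 = n * m := by
        rw [mul_pow, Real.sq_sqrt (by positivity)]
        field_simp
    _ ≤ 2 * (n / m : ℕ) * m * m := by gcongr
    _ = (√2 * √(n / m : ℕ) * m) ^ 2 := by
        rw [mul_pow, mul_pow, Real.sq_sqrt (by norm_num), Real.sq_sqrt (Nat.cast_nonneg _)]
        ring

lemma mul_mul_unifQuantErr_one_le {n m : ℕ} (hm : 0 < m) (hmn : m ≤ n)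
    (hμ : HasFiniteMoment 1 μ) :
    3 / 4 * (√(n / m : ℕ) * m * (unifQuantErr 1 m μ).toReal) ≤
      4 * √(8 * Real.log (2 * n)) *
        ∫ X, lipDiscrepancy μ Finset.univ X ∂(Measure.pi fun _ : Fin n => μ) := by
  have : NeZero n := ⟨(hm.trans_le hmn).ne'⟩
  have hr : (0 : ℝ) < (n / m : ℕ) := by exact_mod_cast Nat.div_pos hmn hm
  obtain ⟨B, hB, hBm⟩ := exists_pairwise_disjoint_card_eq (κ := Fin (n / m)) (ι := Fin n) (m := m)
    (by simpa using Nat.div_mul_le_self n m)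
  have hblock (k : Fin (n / m)) : m * (unifQuantErr 1 m μ).toReal ≤
      ∫ X, lipDiscrepancy μ (B k) X ∂(Measure.pi fun _ => μ) :=
    hBm k ▸ card_mul_unifQuantErr_one_le_integral (Finset.card_pos.1 (hBm k ▸ hm)) hμ
  have hlower := Finset.card_nsmul_le_sum Finset.univ _ _ fun k _ => hblock k
  rw [Finset.card_univ, Fintype.card_fin, nsmul_eq_mul] at hlower
  have hupper := sum_integral_lipDiscrepancy_le_mul_sqrt_log hμ hB
    (by simpa using Nat.div_le_self n m)
  simp only [Fintype.card_fin] at hupper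
  refine le_of_mul_le_mul_left ?_ (Real.sqrt_pos.2 hr)
  calc √(n / m : ℕ) * (3 / 4 * (√(n / m : ℕ) * m * (unifQuantErr 1 m μ).toReal))
      = 3 / 4 * ((n / m : ℕ) * (m * (unifQuantErr 1 m μ).toReal)) := by
        linear_combination 3 / 4 * m * (unifQuantErr 1 m μ).toReal * Real.mul_self_sqrt hr.le
    _ ≤ _ := (mul_le_mul_of_nonneg_left hlower (by norm_num)).trans hupper
    _ = _ := by ring

lemma sqrt_div_mul_unifQuantErr_one_le {n m : ℕ} (hm : 0 < m) (hmn : m ≤ n)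
    (hμ : HasFiniteMoment 1 μ) :
    √((m : ℝ) / n) * (unifQuantErr 1 m μ).toReal ≤ 22 * √(Real.log (2 * n)) *
      ((∫ X, lipDiscrepancy μ Finset.univ X ∂(Measure.pi fun _ : Fin n => μ)) / n) := by
  have hn : (0 : ℝ) < n := by exact_mod_cast hm.trans_le hmn
  set a := ∫ X, lipDiscrepancy μ Finset.univ X ∂(Measure.pi fun _ : Fin n => μ)
  have ha : 0 ≤ a := integral_nonneg fun X => lipDiscrepancy_nonneg hμ _ X
  have hsqrt : √2 * √(8 * Real.log (2 * n)) = 4 * √(Real.log (2 * n)) := by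
    rw [← Real.sqrt_mul zero_le_two, ← mul_assoc, Real.sqrt_mul (by norm_num),
      show (2 * 8 : ℝ) = 4 ^ 2 by norm_num, Real.sqrt_sq (by norm_num)]
  rw [← mul_div_assoc, le_div_iff₀ hn]
  calc √((m : ℝ) / n) * (unifQuantErr 1 m μ).toReal * n
      = √((m : ℝ) / n) * n * (unifQuantErr 1 m μ).toReal := by ring
    _ ≤ √2 * √(n / m : ℕ) * m * (unifQuantErr 1 m μ).toReal :=
        mul_le_mul_of_nonneg_right (sqrt_div_mul_le_sqrt_two_mul hm hmn) ENNReal.toReal_nonneg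
    _ = 4 / 3 * √2 * (3 / 4 * (√(n / m : ℕ) * m * (unifQuantErr 1 m μ).toReal)) := by ring
    _ ≤ 4 / 3 * √2 * (4 * √(8 * Real.log (2 * n)) * a) :=
        mul_le_mul_of_nonneg_left (mul_mul_unifQuantErr_one_le hm hmn hμ) (by positivity)
    _ = 64 / 3 * √(Real.log (2 * n)) * a := by linear_combination 16 / 3 * a * hsqrt
    _ ≤ 22 * √(Real.log (2 * n)) * a := by gcongr; norm_num

theorem iSup_unifQuantErr_le_expWp_one {n : ℕ} (hn : n ≠ 0) (hμ : HasFiniteMoment 1 μ) :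
    ENNReal.ofReal (1 / (22 * √(Real.log (2 * n)))) *
        (⨆ k ∈ Finset.range (Nat.log 2 n + 1),
          ENNReal.ofReal (√((2 : ℝ) ^ k / n)) * unifQuantErr 1 (2 ^ k) μ) ≤ expWp 1 μ n := by
  have hlog : 0 < √(Real.log (2 * n)) := Real.sqrt_pos.2 <| Real.log_pos <| by
    exact_mod_cast (by lia : 1 < 2 * n)
  simp only [ENNReal.mul_iSup, iSup_le_iff]
  intro k hk
  have hkn : 2 ^ k ≤ n := Nat.pow_le_of_le_log hn (Finset.mem_range_succ_iff.1 hk)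
  rw [expWp_one_eq hn hμ,
    ← ENNReal.ofReal_toReal (unifQuantErr_one_ne_top (pow_ne_zero k two_ne_zero) hμ),
    ← ENNReal.ofReal_mul (Real.sqrt_nonneg _), ← ENNReal.ofReal_mul (by positivity)]
  refine ENNReal.ofReal_le_ofReal ?_
  rw [one_div, inv_mul_le_iff₀ (by positivity)]
  exact_mod_cast sqrt_div_mul_unifQuantErr_one_le (pow_pos two_pos k) hkn hμ

end LowerBound

/-- **Theorem (main1).** Let `(E, d_E)` be a separable metric space, `μ ∈ 𝒫₁(E)` and
`n ∈ ℕ`. Then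
`(1/(22√ln(2n))) · max_{0 ≤ k ≤ ⌊log₂ n⌋} √(2^k/n) · b_{2^k,1}(μ) ≤ 𝔼[W₁(μ_n, μ)]`
and `𝔼[W₁(μ_n, μ)] ≤ 5 · ∑_{k=0}^{⌊log₂ n⌋} √(2^k/n) · b_{2^k,1}(μ)`. -/
theorem stmt_0 {E : Type*} [MetricSpace E] [TopologicalSpace.SeparableSpace E]
    [MeasurableSpace E] [BorelSpace E]
    (μ : Measure E) [IsProbabilityMeasure μ] (hμ : HasFiniteMoment 1 μ)
    (n : ℕ) (hn : 1 ≤ n) :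
    ENNReal.ofReal (1 / (22 * Real.sqrt (Real.log (2 * n)))) *
        (⨆ k ∈ Finset.range (Nat.log 2 n + 1),
          ENNReal.ofReal (Real.sqrt ((2 : ℝ) ^ k / n)) * unifQuantErr 1 (2 ^ k) μ)
      ≤ expWp 1 μ n ∧
    expWp 1 μ n ≤ 5 * ∑ k ∈ Finset.range (Nat.log 2 n + 1),
          ENNReal.ofReal (Real.sqrt ((2 : ℝ) ^ k / n)) * unifQuantErr 1 (2 ^ k) μ := by
  have := UniformSpace.secondCountable_of_separable E
  have hn' : n ≠ 0 := Nat.one_le_iff_ne_zero.1 hn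
  exact ⟨iSup_unifQuantErr_le_expWp_one hn' hμ, expWp_one_le_sum_unifQuantErr hn' hμ⟩
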